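/- arXiv:2306.16183 — 4 statements merged into one kernel-verified Lean document; each statement's English description precedes it below -/
import Mathlib

section
/- Let s ∈ (1,2], let x₀ ∈ ℝⁿ, and let P be an affine polynomial on ℝⁿ with P(x₀) > 0 and ∇P ≠ 0. Set δ := P(x₀)/|∇P|. Then for every λ > 1 and every nonnegative F ∈ C^s(B(x₀, λδ)) whose 1-jet at x₀ equals P (i.e., F(x₀) = P(x₀) and ∇F(x₀) = ∇P), one has ‖F‖_{Ċ^s(B(x₀,λδ))} ≥ (s(λ−1)/λ^s) · |∇P|^s / P(x₀)^{s−1}. -/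
open Set ENNReal
open scoped NNReal

noncomputable section

/-- The largest integer strictly less than `s` (for `s > 0`). -/
def lowFloor (s : ℝ) : ℕ := ⌈s⌉₊ - 1

variable {E : Type*} [NormedAddCommGroup E] [NormedSpace ℝ E]

/-- `max_{0 ≤ m < s} sup_{x ∈ Ω} |∇^m F(x)|`, valued in `ℝ≥0∞`. -/
def derivSup (s : ℝ) (Ω : Set E) (F : E → ℝ) : ℝ≥0∞ :=
  ⨆ (m : ℕ) (_ : m ≤ lowFloor s) (x : E) (_ : x ∈ Ω),
    (‖iteratedFDerivWithin ℝ m F Ω x‖₊ : ℝ≥0∞)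

/-- The homogeneous Hölder seminorm `‖F‖_{Ċ^s(Ω)}`, valued in `ℝ≥0∞`. -/
def holderSemi (s : ℝ) (Ω : Set E) (F : E → ℝ) : ℝ≥0∞ :=
  ⨆ (x : E) (_ : x ∈ Ω) (y : E) (_ : y ∈ Ω) (_ : x ≠ y),
    (‖iteratedFDerivWithin ℝ (lowFloor s) F Ω x
        - iteratedFDerivWithin ℝ (lowFloor s) F Ω y‖₊ : ℝ≥0∞)
      / ENNReal.ofReal (‖x - y‖ ^ (s - (lowFloor s : ℝ)))

/-- The Hölder norm `‖F‖_{C^s(Ω)}`, valued in `ℝ≥0∞`. -/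
def csNorm (s : ℝ) (Ω : Set E) (F : E → ℝ) : ℝ≥0∞ :=
  derivSup s Ω F + holderSemi s Ω F

/-- Membership in `C^s(Ω)`. -/
def MemCs (s : ℝ) (Ω : Set E) (F : E → ℝ) : Prop :=
  ContDiffOn ℝ (lowFloor s : ℕ∞) F Ω ∧ csNorm s Ω F ≠ ∞

/-- The flat seminorm `‖F‖_{Ḟ^s(Ω)}`, valued in `ℝ≥0∞`.  (In `ℝ≥0∞` one has
`0/0 = 0` and `a/0 = ∞` for `a ≠ 0`, matching the paper's conventions; for
`0 < s < 1` the supremum is empty, hence `0`.) -/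
def flatSemi (s : ℝ) (Ω : Set E) (F : E → ℝ) : ℝ≥0∞ :=
  ⨆ (m : ℕ) (_ : 1 ≤ m) (_ : m ≤ lowFloor s) (x : E) (_ : x ∈ Ω),
    ((‖iteratedFDerivWithin ℝ m F Ω x‖₊ : ℝ≥0∞) ^ s
      / ENNReal.ofReal (F x) ^ (s - (m : ℝ))) ^ (1 / (m : ℝ))

/-- Membership in the cone `F^s(Ω)`. -/
def MemFs (s : ℝ) (Ω : Set E) (F : E → ℝ) : Prop :=
  MemCs s Ω F ∧ (∀ x ∈ Ω, 0 ≤ F x) ∧ flatSemi s Ω F ≠ ∞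

/-- The norm `‖F‖_{F^s(Ω)} = ‖F‖_{C^s(Ω)} + ‖F‖_{Ḟ^s(Ω)}`. -/
def fsNorm (s : ℝ) (Ω : Set E) (F : E → ℝ) : ℝ≥0∞ :=
  csNorm s Ω F + flatSemi s Ω F

/-- `sup_{x ∈ Ω} |F(x)|`, valued in `ℝ≥0∞`. -/
def supNormSet (Ω : Set E) (F : E → ℝ) : ℝ≥0∞ :=
  ⨆ (x : E) (_ : x ∈ Ω), (‖F x‖₊ : ℝ≥0∞)

/-- `P` is (the function given by) a polynomial of degree at most `D`. -/
def IsPolyDeg (D : ℕ) (P : E → ℝ) : Prop :=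
  ContDiff ℝ (⊤ : ℕ∞) P ∧ ∀ x, iteratedFDeriv ℝ (D + 1) P x = 0

/-- The degree-`D` Taylor polynomial (jet) of `F` at `x`, as a function. -/
def jetAt (D : ℕ) (F : E → ℝ) (x : E) : E → ℝ :=
  fun y => ∑ m ∈ Finset.range (D + 1),
    (iteratedFDeriv ℝ m F x fun _ => y - x) / m.factorial

/-- The degree-`D` Taylor polynomial of `F` at `x` using derivatives within `Ω`. -/
def jetWithinAt (D : ℕ) (F : E → ℝ) (Ω : Set E) (x : E) : E → ℝ :=
  fun y => ∑ m ∈ Finset.range (D + 1),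
    (iteratedFDerivWithin ℝ m F Ω x fun _ => y - x) / m.factorial

/-- The pointwise flatness quantity `max_{1≤m<s} (|∇^m P(x)|^s / P(x)^{s-m})^{1/m}`. -/
def jetFlatAt (s : ℝ) (P : E → ℝ) (x : E) : ℝ≥0∞ :=
  ⨆ (m : ℕ) (_ : 1 ≤ m) (_ : m ≤ lowFloor s),
    ((‖iteratedFDeriv ℝ m P x‖₊ : ℝ≥0∞) ^ s
      / ENNReal.ofReal (P x) ^ (s - (m : ℝ))) ^ (1 / (m : ℝ))

/-- The set `Γ(x₀, M)` of flat nonnegative jets. -/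
def Gamma (s : ℝ) (x₀ : E) (M : ℝ) : Set (E → ℝ) :=
  {P | IsPolyDeg (lowFloor s) P ∧ 0 ≤ P x₀ ∧
    (∀ m ≤ lowFloor s, ‖iteratedFDeriv ℝ m P x₀‖ ≤ M) ∧
    jetFlatAt s P x₀ ≤ ENNReal.ofReal M}

/-- `‖P⃗‖_{J C^s(E)}` for a family of jets `P : E → (E → ℝ)`. -/
def jetCNorm (s : ℝ) (Eset : Set E) (P : E → E → ℝ) : ℝ≥0∞ :=
  (⨆ (x : E) (_ : x ∈ Eset) (m : ℕ) (_ : m ≤ lowFloor s),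
      (‖iteratedFDeriv ℝ m (P x) x‖₊ : ℝ≥0∞))
  + ⨆ (x : E) (_ : x ∈ Eset) (y : E) (_ : y ∈ Eset) (_ : x ≠ y)
      (m : ℕ) (_ : m ≤ lowFloor s),
      (‖iteratedFDeriv ℝ m (P x - P y) y‖₊ : ℝ≥0∞)
        / ENNReal.ofReal (‖x - y‖ ^ (s - (m : ℝ)))

/-- `‖P⃗‖_{J Ḟ^s(E)}` for a family of jets. -/
def jetFlatNorm (s : ℝ) (Eset : Set E) (P : E → E → ℝ) : ℝ≥0∞ :=
  ⨆ (x : E) (_ : x ∈ Eset) (m : ℕ) (_ : 1 ≤ m) (_ : m ≤ lowFloor s),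
    ((‖iteratedFDeriv ℝ m (P x) x‖₊ : ℝ≥0∞) ^ s
      / ENNReal.ofReal |P x x| ^ (s - (m : ℝ))) ^ (1 / (m : ℝ))

/-- `‖P⃗‖_{J F^s(E)}`. -/
def jetFsNorm (s : ℝ) (Eset : Set E) (P : E → E → ℝ) : ℝ≥0∞ :=
  jetCNorm s Eset P + jetFlatNorm s Eset P

/-- The trace norm `‖f‖_{F^s(S)}` (with `inf ∅ = ∞`). -/
def traceNorm (s : ℝ) (S : Set E) (f : E → ℝ) : ℝ≥0∞ :=
  ⨅ (F : E → ℝ) (_ : MemFs s (univ : Set E) F ∧ ∀ x ∈ S, F x = f x),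
    fsNorm s (univ : Set E) F


/-!
A nonnegative function with gradient `ℓ` at `x₀` would become negative when one moves against `ℓ`,
unless its gradient turns: by the first-order Taylor estimate for an `(s - 1)`-Hölder gradient with
constant `M`, moving a distance `r` gives `0 ≤ F x₀ - r ‖ℓ‖ + M r ^ s / s`. Letting `r` tend to the
radius of the ball and solving for `M` is the lower bound. In a normed space `‖ℓ‖` need not be
attained, so the estimate is applied in all unit directions.
-/

theorem lowFloor_eq_iff {s : ℝ} {k : ℕ} (hk : k ≠ 0) :
    lowFloor s = k ↔ (k : ℝ) < s ∧ s ≤ k + 1 := by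
  have hceil : lowFloor s = k ↔ ⌈s⌉₊ = k + 1 := by
    unfold lowFloor
    omega
  rw [hceil, Nat.ceil_eq_iff k.succ_ne_zero]
  simp

theorem MemCs.differentiableOn {s : ℝ} (hs : 1 < s) {Ω : Set E} {F : E → ℝ} (hF : MemCs s Ω F) :
    DifferentiableOn ℝ F Ω := by
  have hfloor : lowFloor s ≠ 0 := by
    have hceil : 1 < ⌈s⌉₊ := Nat.lt_ceil.mpr (by simpa using hs)
    unfold lowFloor
    omega
  exact hF.1.differentiableOn (by exact_mod_cast hfloor)

theorem norm_iteratedFDerivWithin_sub_le_holderSemi {s : ℝ} {Ω : Set E} {F : E → ℝ}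
    (hfin : holderSemi s Ω F ≠ ∞) {x y : E} (hx : x ∈ Ω) (hy : y ∈ Ω) :
    ‖iteratedFDerivWithin ℝ (lowFloor s) F Ω x - iteratedFDerivWithin ℝ (lowFloor s) F Ω y‖ ≤
      (holderSemi s Ω F).toReal * ‖x - y‖ ^ (s - lowFloor s) := by
  rcases eq_or_ne x y with rfl | hxy
  · rw [sub_self, norm_zero]
    positivity
  have hpos : 0 < ‖x - y‖ ^ (s - lowFloor s) :=
    Real.rpow_pos_of_pos (norm_sub_pos_iff.mpr hxy) _
  have hle : (‖iteratedFDerivWithin ℝ (lowFloor s) F Ω x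
        - iteratedFDerivWithin ℝ (lowFloor s) F Ω y‖₊ : ℝ≥0∞)
      / ENNReal.ofReal (‖x - y‖ ^ (s - lowFloor s)) ≤ holderSemi s Ω F :=
    le_iSup₂_of_le x hx (le_iSup₂_of_le y hy (le_iSup_of_le hxy le_rfl))
  have hreal := ENNReal.toReal_mono hfin hle
  rwa [ENNReal.toReal_div, ENNReal.toReal_ofReal hpos.le, ENNReal.coe_toReal, coe_nnnorm,
    div_le_iff₀ hpos] at hreal

theorem norm_fderivWithin_sub_le_holderSemi {s : ℝ} (hs1 : 1 < s) (hs2 : s ≤ 2) {Ω : Set E}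
    (hΩ : UniqueDiffOn ℝ Ω) {F : E → ℝ} (hfin : holderSemi s Ω F ≠ ∞) {x y : E}
    (hx : x ∈ Ω) (hy : y ∈ Ω) :
    ‖fderivWithin ℝ F Ω x - fderivWithin ℝ F Ω y‖ ≤
      (holderSemi s Ω F).toReal * ‖x - y‖ ^ (s - 1) := by
  have hfloor : lowFloor s = 1 :=
    (lowFloor_eq_iff one_ne_zero).mpr ⟨by simpa using hs1, by norm_num [hs2]⟩
  have h := norm_iteratedFDerivWithin_sub_le_holderSemi hfin hx hy
  rwa [hfloor, Nat.cast_one, ← dist_eq_norm (iteratedFDerivWithin ℝ 1 F Ω x),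
    dist_iteratedFDerivWithin_one F F (hΩ x hx) (hΩ y hy), dist_eq_norm] at h

theorem norm_sub_sub_fderivWithin_le_rpow {G : Type*} [NormedAddCommGroup G] [NormedSpace ℝ G]
    {s M : ℝ} (hs : 1 ≤ s) {Ω : Set E} (hΩ : Convex ℝ Ω) {F : E → G}
    (hF : DifferentiableOn ℝ F Ω) {x y : E} (hx : x ∈ Ω) (hy : y ∈ Ω)
    (hM : ∀ z ∈ Ω, ‖fderivWithin ℝ F Ω z - fderivWithin ℝ F Ω x‖ ≤ M * ‖z - x‖ ^ (s - 1)) :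
    ‖F y - F x - fderivWithin ℝ F Ω x (y - x)‖ ≤ M * ‖y - x‖ ^ s / s := by
  have hs0 : s ≠ 0 := by positivity
  set h := y - x
  set ℓ := fderivWithin ℝ F Ω x
  let γ : ℝ → E := AffineMap.lineMap x y
  have hγ_mem : MapsTo γ (Icc 0 1) Ω := hΩ.mapsTo_lineMap hx hy
  have hγ_sub (t : ℝ) : γ t - x = t • h := by simp [γ, h, AffineMap.lineMap_apply]
  have hderiv (t : ℝ) (ht : t ∈ Icc 0 1) :
      HasDerivWithinAt (fun t => F (γ t) - F x - t • ℓ h)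
        (fderivWithin ℝ F Ω (γ t) h - ℓ h) (Icc 0 1) t := by
    have hcomp := (hF _ (hγ_mem ht)).hasFDerivWithinAt.comp_hasDerivWithinAt t
      AffineMap.hasDerivWithinAt_lineMap hγ_mem
    exact ((hcomp.sub_const (F x)).sub ((hasDerivWithinAt_id t _).smul_const (ℓ h))).congr_deriv
      (by rw [one_smul])
  have hbound_deriv (t : ℝ) :
      HasDerivAt (fun t : ℝ => M * ‖h‖ ^ s / s * t ^ s) (M * ‖h‖ ^ s * t ^ (s - 1)) t :=
    ((Real.hasDerivAt_rpow_const (Or.inr hs)).const_mul _).congr_deriv (by field_simp)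
  have hbound (t : ℝ) (ht : t ∈ Ico 0 1) :
      ‖fderivWithin ℝ F Ω (γ t) h - ℓ h‖ ≤ M * ‖h‖ ^ s * t ^ (s - 1) :=
    calc ‖fderivWithin ℝ F Ω (γ t) h - ℓ h‖
        ≤ ‖fderivWithin ℝ F Ω (γ t) - ℓ‖ * ‖h‖ := (fderivWithin ℝ F Ω (γ t) - ℓ).le_opNorm h
      _ ≤ M * ‖t • h‖ ^ (s - 1) * ‖h‖ := by
        gcongr
        exact hγ_sub t ▸ hM _ (hγ_mem (Ico_subset_Icc_self ht))
      _ = M * (‖h‖ ^ (s - 1) * ‖h‖) * t ^ (s - 1) := by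
        rw [norm_smul, Real.norm_of_nonneg ht.1, Real.mul_rpow ht.1 (norm_nonneg h)]
        ring
      _ = M * ‖h‖ ^ s * t ^ (s - 1) := by
        rw [← Real.rpow_add_one' (norm_nonneg h) (by simpa using hs0), sub_add_cancel]
  have hfence := image_norm_le_of_norm_deriv_right_le_deriv_boundary
    (fun t ht => (hderiv t ht).continuousWithinAt)
    (fun t ht => (hderiv t (Ico_subset_Icc_self ht)).mono_of_mem_nhdsWithin
      (Icc_mem_nhdsGE_of_mem ht))
    (by simp [γ, Real.zero_rpow hs0]) hbound_deriv hbound (right_mem_Icc.mpr zero_le_one)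
  simpa [γ] using hfence

theorem abs_fderivWithin_apply_le_of_nonneg {s M : ℝ} (hs : 1 ≤ s) {Ω : Set E}
    (hΩ : Convex ℝ Ω) {F : E → ℝ} (hF : DifferentiableOn ℝ F Ω) (hnonneg : ∀ y ∈ Ω, 0 ≤ F y)
    {x w : E} (hx : x ∈ Ω) (hadd : x + w ∈ Ω) (hsub : x - w ∈ Ω)
    (hM : ∀ z ∈ Ω, ‖fderivWithin ℝ F Ω z - fderivWithin ℝ F Ω x‖ ≤ M * ‖z - x‖ ^ (s - 1)) :
    |fderivWithin ℝ F Ω x w| ≤ F x + M * ‖w‖ ^ s / s := by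
  have hstep {u : E} (hu : x + u ∈ Ω) : -fderivWithin ℝ F Ω x u ≤ F x + M * ‖u‖ ^ s / s := by
    have htaylor := norm_sub_sub_fderivWithin_le_rpow hs hΩ hF hx hu hM
    rw [add_sub_cancel_left, Real.norm_eq_abs] at htaylor
    linarith [hnonneg _ hu, le_of_abs_le htaylor]
  have hneg := hstep (u := -w) (by rwa [← sub_eq_add_neg])
  rw [map_neg, neg_neg, norm_neg] at hneg
  exact abs_le'.mpr ⟨hneg, hstep hadd⟩

theorem norm_fderivWithin_mul_le_of_nonneg_ball {s M R : ℝ} (hs : 1 ≤ s) (hM0 : 0 ≤ M)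
    (hR : 0 < R) {x : E} {F : E → ℝ} (hF : DifferentiableOn ℝ F (Metric.ball x R))
    (hnonneg : ∀ y ∈ Metric.ball x R, 0 ≤ F y)
    (hM : ∀ z ∈ Metric.ball x R,
      ‖fderivWithin ℝ F (Metric.ball x R) z - fderivWithin ℝ F (Metric.ball x R) x‖ ≤
        M * ‖z - x‖ ^ (s - 1)) :
    ‖fderivWithin ℝ F (Metric.ball x R) x‖ * R ≤ F x + M * R ^ s / s := by
  set ℓ := fderivWithin ℝ F (Metric.ball x R) x
  have hx : x ∈ Metric.ball x R := Metric.mem_ball_self hR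
  have hsphere {u : E} (hu : ‖u‖ = 1) {r : ℝ} (hr : r ∈ Ioo 0 R) :
      ‖ℓ u‖ * r ≤ F x + M * r ^ s / s := by
    have hnorm : ‖r • u‖ = r := by rw [norm_smul, hu, mul_one, Real.norm_of_nonneg hr.1.le]
    have h := abs_fderivWithin_apply_le_of_nonneg hs (convex_ball x R) hF hnonneg (w := r • u) hx
      (by simpa [hnorm] using hr.2) (by simpa [mem_ball_iff_norm, hnorm] using hr.2) hM
    rwa [hnorm, ← Real.norm_eq_abs, map_smul, norm_smul, Real.norm_of_nonneg hr.1.le,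
      mul_comm] at h
  have hlimit {u : E} (hu : ‖u‖ = 1) : ‖ℓ u‖ * R ≤ F x + M * R ^ s / s := by
    have hrpow : Continuous fun r : ℝ => r ^ s := Real.continuous_rpow_const (by positivity)
    refine le_on_closure (fun r => hsphere hu) (by fun_prop) (by fun_prop) ?_
    rw [closure_Ioo hR.ne]
    exact right_mem_Icc.mpr hR.le
  have hFx : 0 ≤ F x := hnonneg x hx
  rw [← le_div_iff₀ hR]
  exact ℓ.opNorm_le_of_unit_norm (by positivity) fun u hu => (le_div_iff₀ hR).mpr (hlimit hu)

theorem ofReal_le_holderSemi_ball {s R : ℝ} (hs1 : 1 < s) (hs2 : s ≤ 2) (hR : 0 < R) {x : E}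
    {F : E → ℝ} (hF : DifferentiableOn ℝ F (Metric.ball x R))
    (hnonneg : ∀ y ∈ Metric.ball x R, 0 ≤ F y) :
    ENNReal.ofReal (s * (‖fderivWithin ℝ F (Metric.ball x R) x‖ * R - F x) / R ^ s) ≤
      holderSemi s (Metric.ball x R) F := by
  rcases eq_or_ne (holderSemi s (Metric.ball x R) F) ∞ with htop | hfin
  · exact htop ▸ le_top
  have hbound := norm_fderivWithin_mul_le_of_nonneg_ball hs1.le ENNReal.toReal_nonneg hR hF hnonneg
    fun z hz => norm_fderivWithin_sub_le_holderSemi hs1 hs2 Metric.isOpen_ball.uniqueDiffOn hfin hz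
      (Metric.mem_ball_self hR)
  refine ENNReal.ofReal_le_of_le_toReal ?_
  rw [div_le_iff₀ (by positivity), mul_comm s, ← le_div_iff₀ (by positivity)]
  linarith

theorem mul_sub_div_rpow_eq {a b lam : ℝ} (ha : 0 < a) (hb : 0 < b) (hlam : 0 < lam) (s : ℝ) :
    s * (b * (lam * (a / b)) - a) / (lam * (a / b)) ^ s =
      s * (lam - 1) / lam ^ s * (b ^ s / a ^ (s - 1)) := by
  rw [Real.mul_rpow hlam.le (by positivity), Real.div_rpow ha.le hb.le, Real.rpow_sub_one ha.ne']
  field_simp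

theorem statement8_general {s : ℝ} (hs1 : 1 < s) (hs2 : s ≤ 2) {x₀ : E} {a : ℝ} (ha : 0 < a)
    {ℓ : E →L[ℝ] ℝ} (hℓ : ℓ ≠ 0) {lam : ℝ} (hlam : 0 < lam) {F : E → ℝ}
    (hF : DifferentiableOn ℝ F (Metric.ball x₀ (lam * (a / ‖ℓ‖))))
    (hnonneg : ∀ x ∈ Metric.ball x₀ (lam * (a / ‖ℓ‖)), 0 ≤ F x) (hjet0 : F x₀ = a)
    (hjet1 : fderivWithin ℝ F (Metric.ball x₀ (lam * (a / ‖ℓ‖))) x₀ = ℓ) :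
    ENNReal.ofReal (s * (lam - 1) / lam ^ s * (‖ℓ‖ ^ s / a ^ (s - 1))) ≤
      holderSemi s (Metric.ball x₀ (lam * (a / ‖ℓ‖))) F := by
  have hℓ0 : 0 < ‖ℓ‖ := norm_pos_iff.mpr hℓ
  have hbound := ofReal_le_holderSemi_ball hs1 hs2 (by positivity) hF hnonneg
  rwa [hjet0, hjet1, mul_sub_div_rpow_eq ha hℓ0 hlam] at hbound

/-- Proposition `c2`, first part: for `s ∈ (1,2]`, an affine
polynomial `P(x) = a + ⟪v, x − x₀⟫` with `P(x₀) = a > 0` and `∇P = v ≠ 0`, and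
`δ := a/|v|`: for every `λ > 1` and nonnegative `F ∈ C^s(B(x₀,λδ))` whose 1-jet
at `x₀` is `P`, one has
`‖F‖_{Ċ^s(B(x₀,λδ))} ≥ (s(λ−1)/λ^s) |v|^s / a^{s−1}`. -/
theorem statement8 (n : ℕ) (hn : 1 ≤ n) (s : ℝ) (hs1 : 1 < s) (hs2 : s ≤ 2)
    (x₀ : EuclideanSpace ℝ (Fin n)) (a : ℝ) (ha : 0 < a)
    (v : EuclideanSpace ℝ (Fin n)) (hv : v ≠ 0) (lam : ℝ) (hlam : 1 < lam)
    (F : EuclideanSpace ℝ (Fin n) → ℝ)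
    (hF : MemCs s (Metric.ball x₀ (lam * (a / ‖v‖))) F)
    (hFnonneg : ∀ x ∈ Metric.ball x₀ (lam * (a / ‖v‖)), 0 ≤ F x)
    (hjet0 : F x₀ = a)
    (hjet1 : fderivWithin ℝ F (Metric.ball x₀ (lam * (a / ‖v‖))) x₀
      = innerSL ℝ v) :
    ENNReal.ofReal (s * (lam - 1) / lam ^ s * (‖v‖ ^ s / a ^ (s - 1))) ≤
      holderSemi s (Metric.ball x₀ (lam * (a / ‖v‖))) F := by
  rw [← innerSL_apply_norm (𝕜 := ℝ) v] at hF hFnonneg hjet1 ⊢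
  exact statement8_general hs1 hs2 ha (norm_pos_iff.mp (by simpa using hv)) (by linarith)
    (hF.differentiableOn hs1) hFnonneg hjet0 hjet1

end
end

section
/- Let s ∈ (1,2], let F ∈ C^s(ℝⁿ) be nonnegative, and let Ω ⊆ ℝⁿ be a convex open set. Then the restriction F_Ω of F to Ω satisfies F_Ω ∈ F^s(Ω) and ‖F_Ω‖_{Ḟ^s(Ω)} ≤ (2^s/s) · ‖F‖_{Ċ^s(ℝⁿ)}. -/
open Set ENNReal
open scoped NNReal

noncomputable section

variable {E : Type*} [NormedAddCommGroup E] [NormedSpace ℝ E]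

/-! The estimate is the Hölder form of the classical bound `|∇F| ^ 2 ≤ 2 C F` for a nonnegative `F`
with `C`-Lipschitz gradient. Let `C` be an `(s - 1)`-Hölder constant of `∇F`. A first-order Taylor
expansion and `F ≥ 0` give `t |∇F(x)| ≤ F(x) + C t ^ s / s` for every `t > 0`. Testing this at
`t = 2 F(x) / |∇F(x)|` is the inequality `|∇F(x)| ^ s ≤ (2 ^ s / s) C F(x) ^ (s - 1)`. Since `t` may
be large, `F ≥ 0` is needed on the whole space; restricting to `Ω` only decreases the seminorms. -/

lemma lowFloor_eq_one {s : ℝ} (hs₁ : 1 < s) (hs₂ : s ≤ 2) : lowFloor s = 1 := by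
  have hceil : ⌈s⌉₊ = 2 := (Nat.ceil_eq_iff two_ne_zero).2 ⟨by simpa using hs₁, by simpa using hs₂⟩
  rw [lowFloor, hceil]

section Restriction

variable {s : ℝ} {Ω U : Set E} {F : E → ℝ}

lemma iteratedFDerivWithin_eq_of_subset {m : ℕ} (hF : ContDiffOn ℝ (lowFloor s : ℕ∞) F U)
    (hΩU : Ω ⊆ U) (hΩ : UniqueDiffOn ℝ Ω) (hU : UniqueDiffOn ℝ U) (hm : m ≤ lowFloor s) {x : E}
    (hx : x ∈ Ω) : iteratedFDerivWithin ℝ m F Ω x = iteratedFDerivWithin ℝ m F U x :=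
  iteratedFDerivWithin_subset hΩU hΩ hU (hF.of_le (by exact_mod_cast hm)) hx

lemma derivSup_mono (hF : ContDiffOn ℝ (lowFloor s : ℕ∞) F U) (hΩU : Ω ⊆ U)
    (hΩ : UniqueDiffOn ℝ Ω) (hU : UniqueDiffOn ℝ U) : derivSup s Ω F ≤ derivSup s U F := by
  refine iSup₂_mono fun m hm => iSup_mono fun x => iSup_mono' fun hx => ⟨hΩU hx, ?_⟩
  rw [iteratedFDerivWithin_eq_of_subset hF hΩU hΩ hU hm hx]

lemma holderSemi_mono (hF : ContDiffOn ℝ (lowFloor s : ℕ∞) F U) (hΩU : Ω ⊆ U)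
    (hΩ : UniqueDiffOn ℝ Ω) (hU : UniqueDiffOn ℝ U) : holderSemi s Ω F ≤ holderSemi s U F := by
  refine iSup_mono fun x => iSup_mono' fun hx => ⟨hΩU hx, ?_⟩
  refine iSup_mono fun y => iSup_mono' fun hy => ⟨hΩU hy, ?_⟩
  rw [iteratedFDerivWithin_eq_of_subset hF hΩU hΩ hU le_rfl hx,
    iteratedFDerivWithin_eq_of_subset hF hΩU hΩ hU le_rfl hy]

lemma flatSemi_mono (hF : ContDiffOn ℝ (lowFloor s : ℕ∞) F U) (hΩU : Ω ⊆ U)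
    (hΩ : UniqueDiffOn ℝ Ω) (hU : UniqueDiffOn ℝ U) : flatSemi s Ω F ≤ flatSemi s U F := by
  refine iSup₂_mono fun m _ => iSup_mono fun hm => iSup_mono fun x =>
    iSup_mono' fun hx => ⟨hΩU hx, ?_⟩
  rw [iteratedFDerivWithin_eq_of_subset hF hΩU hΩ hU hm hx]

lemma MemCs.mono (hF : MemCs s U F) (hΩU : Ω ⊆ U) (hΩ : UniqueDiffOn ℝ Ω)
    (hU : UniqueDiffOn ℝ U) : MemCs s Ω F :=
  ⟨hF.1.mono hΩU, ne_top_of_le_ne_top hF.2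
    (add_le_add (derivSup_mono hF.1 hΩU hΩ hU) (holderSemi_mono hF.1 hΩU hΩ hU))⟩

lemma MemFs.mono (hF : MemFs s U F) (hΩU : Ω ⊆ U) (hΩ : UniqueDiffOn ℝ Ω)
    (hU : UniqueDiffOn ℝ U) : MemFs s Ω F :=
  ⟨hF.1.mono hΩU hΩ hU, fun x hx => hF.2.1 x (hΩU hx),
    ne_top_of_le_ne_top hF.2.2 (flatSemi_mono hF.1.1 hΩU hΩ hU)⟩

end Restriction

section HolderSeminorm

lemma edist_iteratedFDerivWithin_le_holderSemi_mul (s : ℝ) {Ω : Set E} (F : E → ℝ) {x y : E}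
    (hx : x ∈ Ω) (hy : y ∈ Ω) :
    edist (iteratedFDerivWithin ℝ (lowFloor s) F Ω x) (iteratedFDerivWithin ℝ (lowFloor s) F Ω y)
      ≤ holderSemi s Ω F * edist x y ^ (s - (lowFloor s : ℝ)) := by
  rcases eq_or_ne x y with rfl | hxy
  · rw [edist_self]
    exact zero_le
  have hpos : 0 < ‖x - y‖ := norm_sub_pos_iff.2 hxy
  have hquot : edist (iteratedFDerivWithin ℝ (lowFloor s) F Ω x)
        (iteratedFDerivWithin ℝ (lowFloor s) F Ω y)
      / ENNReal.ofReal (‖x - y‖ ^ (s - (lowFloor s : ℝ))) ≤ holderSemi s Ω F := by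
    rw [edist_eq_enorm_sub]
    exact le_iSup₂_of_le x hx (le_iSup₂_of_le y hy (le_iSup_of_le hxy le_rfl))
  rwa [ENNReal.div_le_iff (ENNReal.ofReal_pos.2 (Real.rpow_pos_of_pos hpos _)).ne'
    ENNReal.ofReal_ne_top, ← ENNReal.ofReal_rpow_of_pos hpos, ← dist_eq_norm,
    ← edist_dist] at hquot

lemma holderOnWith_fderivWithin_of_holderSemi_ne_top {r : ℝ≥0} (hr₀ : 0 < r) (hr₁ : r ≤ 1)
    {Ω : Set E} (hΩ : UniqueDiffOn ℝ Ω) {F : E → ℝ} (hF : holderSemi (1 + r) Ω F ≠ ∞) :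
    HolderOnWith (holderSemi (1 + r) Ω F).toNNReal r (fderivWithin ℝ F Ω) Ω := by
  intro x hx y hy
  have hfloor : lowFloor (1 + r) = 1 :=
    lowFloor_eq_one (by simpa using hr₀) (by rw [← one_add_one_eq_two]; gcongr; exact hr₁)
  have hle := edist_iteratedFDerivWithin_le_holderSemi_mul (1 + r) F hx hy
  rwa [hfloor, Nat.cast_one, add_sub_cancel_left, edist_dist,
    dist_iteratedFDerivWithin_one F F (hΩ x hx) (hΩ y hy), ← edist_dist,
    ← ENNReal.coe_toNNReal hF] at hle

end HolderSeminorm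

section GradientEstimate

variable {G : Type*} [NormedAddCommGroup G] [NormedSpace ℝ G]

lemma norm_image_sub_le_of_norm_deriv_le_mul_rpow {g g' : ℝ → G} {M r a b : ℝ} (hr : 0 ≤ r)
    (hab : a ≤ b) (hg : ∀ t ∈ Icc a b, HasDerivWithinAt g (g' t) (Icc a b) t)
    (hg' : ∀ t ∈ Ico a b, ‖g' t‖ ≤ M * (t - a) ^ r) :
    ‖g b - g a‖ ≤ M / (1 + r) * (b - a) ^ (1 + r) := by
  have hmajorant (t : ℝ) : HasDerivAt
      (fun t => M / (1 + r) * (t - a) ^ (1 + r)) (M * (t - a) ^ r) t := by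
    refine ((((hasDerivAt_id t).sub_const a).rpow_const (p := 1 + r)
      (Or.inr (by simpa using hr))).const_mul (M / (1 + r))).congr_deriv ?_
    rw [add_sub_cancel_left, id_eq]
    field_simp
  exact image_norm_le_of_norm_deriv_right_le_deriv_boundary
    (fun t ht => ((hg t ht).sub_const (g a)).continuousWithinAt)
    (fun t ht => ((hg t (Ico_subset_Icc_self ht)).sub_const (g a)).mono_of_mem_nhdsWithin
      (Icc_mem_nhdsGE_of_mem ht))
    (by rw [sub_self, norm_zero, sub_self, Real.zero_rpow (by positivity), mul_zero])
    hmajorant hg' (right_mem_Icc.2 hab)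

lemma norm_image_sub_sub_le_of_holderOnWith {f : E → G} {f' : E → E →L[ℝ] G} {K : Set E}
    {C r : ℝ≥0} (hK : Convex ℝ K) (hf : ∀ z ∈ K, HasFDerivWithinAt f (f' z) K z)
    (hf' : HolderOnWith C r f' K) {x y : E} (hx : x ∈ K) (hy : y ∈ K) :
    ‖f y - f x - f' x (y - x)‖ ≤ C / (1 + r) * ‖y - x‖ ^ (1 + r : ℝ) := by
  let γ : ℝ → E := fun t => x + t • (y - x)
  have hγ_mem : MapsTo γ (Icc 0 1) K := fun t ht => hK.add_smul_sub_mem hx hy ht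
  have hγ (t : ℝ) : HasDerivAt γ (y - x) t :=
    (((hasDerivAt_id t).smul_const (y - x)).const_add x).congr_deriv (one_smul ℝ _)
  have hremainder : ∀ t ∈ Icc (0 : ℝ) 1, HasDerivWithinAt
      (fun t => f (γ t) - t • f' x (y - x)) ((f' (γ t) - f' x) (y - x)) (Icc 0 1) t := by
    intro t ht
    have hcomp := (hf _ (hγ_mem ht)).comp_hasDerivWithinAt t (hγ t).hasDerivWithinAt hγ_mem
    have hlinear := ((hasDerivAt_id t).smul_const (f' x (y - x))).hasDerivWithinAt (s := Icc 0 1)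
    exact (hcomp.sub hlinear).congr_deriv (by rw [one_smul, sub_apply])
  have hbound : ∀ t ∈ Ico (0 : ℝ) 1,
      ‖(f' (γ t) - f' x) (y - x)‖ ≤ C * ‖y - x‖ ^ (1 + r : ℝ) * (t - 0) ^ (r : ℝ) := by
    intro t ht
    have hdist := hf'.dist_le (hγ_mem (Ico_subset_Icc_self ht)) hx
    rw [dist_eq_norm, dist_eq_norm, add_sub_cancel_left, norm_smul, Real.norm_of_nonneg ht.1,
      Real.mul_rpow ht.1 (norm_nonneg _)] at hdist
    calc ‖(f' (γ t) - f' x) (y - x)‖ ≤ ‖f' (γ t) - f' x‖ * ‖y - x‖ :=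
          ContinuousLinearMap.le_opNorm _ _
      _ ≤ C * (t ^ (r : ℝ) * ‖y - x‖ ^ (r : ℝ)) * ‖y - x‖ := by gcongr
      _ = C * ‖y - x‖ ^ (1 + r : ℝ) * (t - 0) ^ (r : ℝ) := by
          rw [Real.rpow_one_add' (norm_nonneg _) (by positivity), sub_zero]
          ring
  have hle := norm_image_sub_le_of_norm_deriv_le_mul_rpow r.coe_nonneg zero_le_one hremainder hbound
  simp only [γ, one_smul, zero_smul, add_zero, add_sub_cancel, sub_zero, Real.one_rpow,
    mul_one] at hle
  rwa [sub_right_comm, mul_div_right_comm] at hle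

lemma rpow_one_add_le_of_forall_mul_le {r C g a : ℝ} (hr : 0 ≤ r) (hC : 0 ≤ C) (hg : 0 ≤ g)
    (ha : 0 < a) (h : ∀ t, 0 < t → t * g ≤ a + C / (1 + r) * t ^ (1 + r)) :
    g ^ (1 + r) ≤ 2 ^ (1 + r) / (1 + r) * C * a ^ r := by
  rcases hg.eq_or_lt with rfl | hg
  · rw [Real.zero_rpow (by positivity)]
    positivity
  have htest := h (2 * a / g) (by positivity)
  rw [div_mul_cancel₀ _ hg.ne', Real.div_rpow (by positivity) hg.le,
    Real.mul_rpow zero_le_two ha.le, Real.rpow_one_add' ha.le (by positivity)] at htest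
  have hscaled : a ≤ 2 ^ (1 + r) / (1 + r) * C * a ^ r * a / g ^ (1 + r) := by
    calc a ≤ C / (1 + r) * (2 ^ (1 + r) * (a * a ^ r) / g ^ (1 + r)) := by linarith
      _ = 2 ^ (1 + r) / (1 + r) * C * a ^ r * a / g ^ (1 + r) := by ring
  rw [le_div_iff₀ (by positivity), mul_comm a] at hscaled
  exact le_of_mul_le_mul_right hscaled ha

variable {f : E → ℝ} {C r : ℝ≥0}

lemma mul_norm_fderiv_le_of_holderWith (hf₀ : ∀ x, 0 ≤ f x) (hf : Differentiable ℝ f)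
    (hf' : HolderWith C r (fderiv ℝ f)) (x : E) {t : ℝ} (ht : 0 < t) :
    t * ‖fderiv ℝ f x‖ ≤ f x + C / (1 + r) * t ^ (1 + r : ℝ) := by
  have hdir (v : E) (hv : ‖v‖ = 1) :
      -(t * fderiv ℝ f x v) ≤ f x + C / (1 + r) * t ^ (1 + r : ℝ) := by
    have htaylor := norm_image_sub_sub_le_of_holderOnWith convex_univ
      (fun z _ => (hf z).hasFDerivAt.hasFDerivWithinAt) (hf'.holderOnWith univ)
      (mem_univ x) (mem_univ (x + t • v))
    rw [add_sub_cancel_left, norm_smul, hv, mul_one, Real.norm_of_nonneg ht.le, map_smul,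
      smul_eq_mul] at htaylor
    linarith [(abs_le.1 htaylor).2, hf₀ (x + t • v)]
  rw [mul_comm, ← le_div_iff₀ ht]
  refine ContinuousLinearMap.opNorm_le_of_unit_norm (div_nonneg ?_ ht.le) fun v hv => ?_
  · have := hf₀ x
    positivity
  have hneg := hdir (-v) (by rwa [norm_neg])
  rw [map_neg, mul_neg, neg_neg] at hneg
  rw [le_div_iff₀' ht, Real.norm_eq_abs, ← abs_of_pos ht, ← abs_mul, abs_of_pos ht]
  exact abs_le'.2 ⟨hneg, hdir v hv⟩

lemma norm_fderiv_rpow_le_of_holderWith (hf₀ : ∀ x, 0 ≤ f x) (hf : Differentiable ℝ f)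
    (hf' : HolderWith C r (fderiv ℝ f)) (x : E) :
    ‖fderiv ℝ f x‖ ^ (1 + r : ℝ) ≤ 2 ^ (1 + r : ℝ) / (1 + r) * C * f x ^ (r : ℝ) := by
  -- At a zero of `f` the test value `t = 2 f(x) / |∇f(x)|` vanishes, so take `a ↓ f x`.
  have hgt : ∀ a > f x,
      ‖fderiv ℝ f x‖ ^ (1 + r : ℝ) ≤ 2 ^ (1 + r : ℝ) / (1 + r) * C * a ^ (r : ℝ) := fun a ha =>
    rpow_one_add_le_of_forall_mul_le r.coe_nonneg C.coe_nonneg (norm_nonneg _)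
      ((hf₀ x).trans_lt ha) fun t ht =>
        (mul_norm_fderiv_le_of_holderWith hf₀ hf hf' x ht).trans (by gcongr)
  have hcont : Continuous fun a : ℝ => 2 ^ (1 + r : ℝ) / (1 + r) * C * a ^ (r : ℝ) :=
    (Real.continuous_rpow_const r.coe_nonneg).const_mul _
  exact ge_of_tendsto (hcont.continuousWithinAt (s := Ioi (f x)))
    (eventually_mem_nhdsWithin.mono hgt)

end GradientEstimate

lemma flatSemi_univ_le_holderSemi_univ {s : ℝ} (hs₁ : 1 < s) (hs₂ : s ≤ 2) {F : E → ℝ}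
    (hF₀ : ∀ x, 0 ≤ F x) (hF : Differentiable ℝ F) :
    flatSemi s univ F ≤ ENNReal.ofReal (2 ^ s / s) * holderSemi s univ F := by
  obtain ⟨r, rfl⟩ : ∃ r : ℝ≥0, s = 1 + r :=
    ⟨(s - 1).toNNReal, by rw [Real.coe_toNNReal _ (by linarith), add_sub_cancel]⟩
  have hr₀ : 0 < r := by simpa using hs₁
  have hr₁ : r ≤ 1 := by exact_mod_cast (by linarith : (r : ℝ) ≤ 1)
  rcases eq_or_ne (holderSemi (1 + r) univ F) ∞ with htop | hfin
  · rw [htop, ENNReal.mul_top (ENNReal.ofReal_pos.2 (by positivity)).ne']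
    exact le_top
  have hholder : HolderWith (holderSemi (1 + r) univ F).toNNReal r (fderiv ℝ F) := by
    simpa only [fderivWithin_univ, holderOnWith_univ] using
      holderOnWith_fderivWithin_of_holderSemi_ne_top hr₀ hr₁ uniqueDiffOn_univ hfin
  refine iSup₂_le fun m hm₁ => iSup_le fun hm => iSup₂_le fun x _ => ?_
  obtain rfl : m = 1 := le_antisymm (hm.trans (lowFloor_eq_one hs₁ hs₂).le) hm₁
  have hgrad := ENNReal.ofReal_le_ofReal
    (norm_fderiv_rpow_le_of_holderWith hF₀ hF hholder x)
  rw [← norm_iteratedFDeriv_one, ENNReal.ofReal_mul (by positivity),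
    ENNReal.ofReal_mul (by positivity), ENNReal.ofReal_coe_nnreal, ENNReal.coe_toNNReal hfin,
    ← ENNReal.ofReal_rpow_of_nonneg (hF₀ x) r.coe_nonneg,
    ← ENNReal.ofReal_rpow_of_nonneg (norm_nonneg _) (by positivity), ofReal_norm] at hgrad
  rw [Nat.cast_one, div_one, ENNReal.rpow_one, iteratedFDerivWithin_univ, add_sub_cancel_left]
  exact ENNReal.div_le_of_le_mul hgrad

theorem statement9_general {s : ℝ} (hs₁ : 1 < s) (hs₂ : s ≤ 2) {F : E → ℝ} (hF₀ : ∀ x, 0 ≤ F x)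
    (hF : MemCs s univ F) {Ω : Set E} (hΩ : UniqueDiffOn ℝ Ω) :
    MemFs s Ω F ∧ flatSemi s Ω F ≤ ENNReal.ofReal (2 ^ s / s) * holderSemi s univ F := by
  have hcontDiff : ContDiff ℝ 1 F := by
    simpa [lowFloor_eq_one hs₁ hs₂, contDiffOn_univ] using hF.1
  have hflat := flatSemi_univ_le_holderSemi_univ hs₁ hs₂ hF₀ (hcontDiff.differentiable one_ne_zero)
  have hfin : holderSemi s univ F ≠ ∞ := ne_top_of_le_ne_top hF.2 le_add_self
  have hmem : MemFs s univ F := ⟨hF, fun x _ => hF₀ x,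
    ne_top_of_le_ne_top (ENNReal.mul_ne_top ENNReal.ofReal_ne_top hfin) hflat⟩
  exact ⟨hmem.mono (subset_univ Ω) hΩ uniqueDiffOn_univ,
    (flatSemi_mono hF.1 (subset_univ Ω) hΩ uniqueDiffOn_univ).trans hflat⟩

/-- Proposition `c2`, second part: for `s ∈ (1,2]` and a
nonnegative `F ∈ C^s(ℝⁿ)`, the restriction of `F` to any convex open `Ω`
belongs to `F^s(Ω)` with `‖F_Ω‖_{Ḟ^s(Ω)} ≤ (2^s/s) ‖F‖_{Ċ^s(ℝⁿ)}`. -/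
theorem statement9 (n : ℕ) (hn : 1 ≤ n) (s : ℝ) (hs1 : 1 < s) (hs2 : s ≤ 2) :
    ∀ F : EuclideanSpace ℝ (Fin n) → ℝ, (∀ x, 0 ≤ F x) →
      MemCs s (Set.univ : Set (EuclideanSpace ℝ (Fin n))) F →
    ∀ (Ω : Set (EuclideanSpace ℝ (Fin n))), Convex ℝ Ω → IsOpen Ω →
      MemFs s Ω F ∧
      flatSemi s Ω F ≤ ENNReal.ofReal (2 ^ s / s) *
        holderSemi s (Set.univ : Set (EuclideanSpace ℝ (Fin n))) F :=
  fun _ hF₀ hF _ _ hΩ => statement9_general hs1 hs2 hF₀ hF hΩ.uniqueDiffOn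

end
end

section
/- Let g : ℝ → [0,∞) be the standard bump function defined by g(t) = exp(1 − 1/(1−t²)) for −1 < t < 1 and g(t) = 0 otherwise. Then for every s > 0 there exists a constant C depending only on s such that g ∈ F^s(ℝ) and ‖g‖_{F^s(ℝ)} ≤ C. -/
open Set ENNReal
open scoped NNReal

noncomputable section

variable {E : Type*} [NormedAddCommGroup E] [NormedSpace ℝ E]

/-- The standard bump function `g(t) = exp(1 − 1/(1−t²))` for `|t| < 1`, `0`
otherwise. -/
def stdBump : ℝ → ℝ := fun t =>
  if t ^ 2 < 1 then Real.exp (1 - 1 / (1 - t ^ 2)) else 0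

/-! With `φ(x) = exp(-1/x)` for `x > 0` and `φ(x) = 0` otherwise, the bump is
`g(t) = e φ(1 - t²)`. Every derivative of `φ` has the form `p(1/x) φ(x)` with `p` a polynomial, and
polynomials grow slower than exponentials, so every derivative is `O(φ^θ)` for each `θ < 1`. By Faà
di Bruno's formula this property passes to `φ(1 - t²)`. The exponent `θ = (s - m) / s` gives the
flatness bound at order `m`, and the Hölder bound follows because all derivatives are bounded. -/

open Asymptotics Filter

/-- A nonnegative smooth function is infinitely flat on `Ω` if each of its derivatives is dominated
there by each of its powers with exponent in `(0, 1)`, so that it is flat of every order `s` at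
once. The constant may depend on the exponent and on the order of the derivative. -/
structure InfinitelyFlatOn (F : E → ℝ) (Ω : Set E) : Prop where
  contDiffOn : ContDiffOn ℝ (⊤ : ℕ∞) F Ω
  nonneg : ∀ x ∈ Ω, 0 ≤ F x
  isBigO_rpow : ∀ (m : ℕ) ⦃θ : ℝ⦄, 0 < θ → θ < 1 →
    iteratedFDerivWithin ℝ m F Ω =O[𝓟 Ω] fun x => F x ^ θ

section Seminorms

variable {s : ℝ} {Ω : Set E} {F : E → ℝ}

lemma lowFloor_lt (hs : 0 < s) : (lowFloor s : ℝ) < s :=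
  Nat.lt_ceil.1 (Nat.sub_lt (Nat.ceil_pos.2 hs) one_pos)

lemma le_lowFloor_add_one (s : ℝ) : s ≤ lowFloor s + 1 :=
  (Nat.le_ceil s).trans (by exact_mod_cast Nat.le_add_of_sub_le le_rfl)

lemma biSup_ne_top_of_finite {ι α : Type*} [CompleteLinearOrder α] [Nontrivial α] {I : Set ι}
    (hI : I.Finite) {f : ι → α} (hf : ∀ i ∈ I, f i ≠ ⊤) : ⨆ i ∈ I, f i ≠ ⊤ := by
  have := hI.to_subtype
  rw [iSup_subtype']
  exact _root_.iSup_ne_top fun i => hf i i.2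

lemma exists_enorm_le_mul_of_isBigO_principal {α V W : Type*} [SeminormedAddCommGroup V]
    [SeminormedAddCommGroup W] {S : Set α} {f : α → V} {g : α → W} (h : f =O[𝓟 S] g) :
    ∃ C : ℝ≥0, ∀ x ∈ S, ‖f x‖ₑ ≤ C * ‖g x‖ₑ := by
  obtain ⟨C, hC, hfg⟩ := h.exists_nonneg
  lift C to ℝ≥0 using hC
  refine ⟨C, fun x hx => ?_⟩
  rw [enorm_eq_nnnorm, enorm_eq_nnnorm]
  exact_mod_cast isBigOWith_principal.1 hfg x hx

lemma derivSup_ne_top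
    (h : ∀ m ≤ lowFloor s, iteratedFDerivWithin ℝ m F Ω =O[𝓟 Ω] fun _ => (1 : ℝ)) :
    derivSup s Ω F ≠ ∞ := by
  refine biSup_ne_top_of_finite (finite_Iic (lowFloor s)) fun m hm => ?_
  obtain ⟨C, hC⟩ := exists_enorm_le_mul_of_isBigO_principal (h m hm)
  exact ne_top_of_le_ne_top coe_ne_top (iSup₂_le fun x hx => by simpa using hC x hx)

lemma holderSemi_le_of_holderOnWith {C r : ℝ≥0} (hr : (r : ℝ) = s - lowFloor s)
    (h : HolderOnWith C r (iteratedFDerivWithin ℝ (lowFloor s) F Ω) Ω) :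
    holderSemi s Ω F ≤ C := by
  refine iSup₂_le fun x hx => iSup₂_le fun y hy => iSup_le fun _ => ENNReal.div_le_of_le_mul ?_
  rw [← hr, ← ENNReal.ofReal_rpow_of_nonneg (norm_nonneg _) r.coe_nonneg, ofReal_norm,
    ← edist_eq_enorm_sub, ← enorm_eq_nnnorm, ← edist_eq_enorm_sub]
  exact h x hx y hy

lemma exists_holderOnWith_of_isBigO_one {V : Type*} [NormedAddCommGroup V] [NormedSpace ℝ V]
    {f : E → V} {r : ℝ≥0} (hr : r ≤ 1) (hΩ : Convex ℝ Ω) (hdiff : DifferentiableOn ℝ f Ω)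
    (hf : f =O[𝓟 Ω] fun _ => (1 : ℝ)) (hf' : fderivWithin ℝ f Ω =O[𝓟 Ω] fun _ => (1 : ℝ)) :
    ∃ C, HolderOnWith C r f Ω := by
  obtain ⟨B, hB⟩ := exists_enorm_le_mul_of_isBigO_principal hf
  obtain ⟨L, hL⟩ := exists_enorm_le_mul_of_isBigO_principal hf'
  have bounded : HolderOnWith (B + B) 0 f Ω := fun x hx y hy => by
    simpa [edist_eq_enorm_sub] using
      enorm_sub_le.trans (add_le_add (hB x hx) (hB y hy))
  have lipschitz : LipschitzOnWith L f Ω :=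
    hΩ.lipschitzOnWith_of_nnnorm_fderivWithin_le hdiff fun x hx => by
      simpa [enorm_eq_nnnorm] using hL x hx
  exact ⟨_, bounded.of_le_of_le (holderOnWith_one.2 lipschitz) zero_le hr⟩

lemma holderSemi_ne_top (hs : 0 < s) (hΩ : Convex ℝ Ω)
    (hdiff : DifferentiableOn ℝ (iteratedFDerivWithin ℝ (lowFloor s) F Ω) Ω)
    (h : iteratedFDerivWithin ℝ (lowFloor s) F Ω =O[𝓟 Ω] fun _ => (1 : ℝ))
    (h' : iteratedFDerivWithin ℝ (lowFloor s + 1) F Ω =O[𝓟 Ω] fun _ => (1 : ℝ)) :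
    holderSemi s Ω F ≠ ∞ := by
  obtain ⟨r, hr⟩ : ∃ r : ℝ≥0, (r : ℝ) = s - lowFloor s :=
    ⟨⟨_, (sub_pos.2 (lowFloor_lt hs)).le⟩, rfl⟩
  have hr1 : r ≤ 1 := by
    rw [← NNReal.coe_le_coe, hr, NNReal.coe_one]
    linarith [le_lowFloor_add_one s]
  have hfderiv : fderivWithin ℝ (iteratedFDerivWithin ℝ (lowFloor s) F Ω) Ω
      =O[𝓟 Ω] fun _ => (1 : ℝ) :=
    (isBigO_of_le _ fun _ => norm_fderivWithin_iteratedFDerivWithin.le).trans h'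
  obtain ⟨C, hC⟩ := exists_holderOnWith_of_isBigO_one hr1 hΩ hdiff h hfderiv
  exact ne_top_of_le_ne_top coe_ne_top (holderSemi_le_of_holderOnWith hr hC)

lemma flatSemi_ne_top (hs : 0 < s) (hF : ∀ x ∈ Ω, 0 ≤ F x)
    (h : ∀ m, 1 ≤ m → m ≤ lowFloor s →
      iteratedFDerivWithin ℝ m F Ω =O[𝓟 Ω] fun x => F x ^ ((s - m) / s)) :
    flatSemi s Ω F ≠ ∞ := by
  refine (iSup_congr fun m => iSup_comm).trans_ne
    (biSup_ne_top_of_finite (finite_Iic (lowFloor s)) fun m (hm : m ≤ lowFloor s) => ?_)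
  by_cases hm1 : 1 ≤ m
  swap
  · simp [hm1]
  have hms : (m : ℝ) < s := (Nat.cast_le.2 hm).trans_lt (lowFloor_lt hs)
  obtain ⟨C, hC⟩ := exists_enorm_le_mul_of_isBigO_principal (h m hm1 hm)
  refine ne_top_of_le_ne_top (b := ((C : ℝ≥0∞) ^ s) ^ (1 / (m : ℝ)))
    (by finiteness) (iSup_le fun _ => iSup₂_le fun x hx => ?_)
  refine ENNReal.rpow_le_rpow (ENNReal.div_le_of_le_mul ?_) (by positivity)
  calc ‖iteratedFDerivWithin ℝ m F Ω x‖ₑ ^ s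
      ≤ (C * ENNReal.ofReal (F x) ^ ((s - m) / s)) ^ s := by
        rw [ENNReal.ofReal_rpow_of_nonneg (hF x hx) (div_nonneg (sub_pos.2 hms).le hs.le),
          ← Real.enorm_of_nonneg (Real.rpow_nonneg (hF x hx) _)]
        exact ENNReal.rpow_le_rpow (hC x hx) hs.le
    _ = (C : ℝ≥0∞) ^ s * ENNReal.ofReal (F x) ^ (s - m) := by
        rw [ENNReal.mul_rpow_of_nonneg _ _ hs.le, ← ENNReal.rpow_mul, div_mul_cancel₀ _ hs.ne']

lemma MemFs.fsNorm_ne_top (h : MemFs s Ω F) : fsNorm s Ω F ≠ ∞ :=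
  ENNReal.add_ne_top.2 ⟨h.1.2, h.2.2⟩

end Seminorms

namespace InfinitelyFlatOn

variable {F : E → ℝ} {Ω : Set E}

lemma isBigO_one (h : InfinitelyFlatOn F Ω) : F =O[𝓟 Ω] fun _ => (1 : ℝ) := by
  obtain ⟨C, hC⟩ := isBigO_principal.1 (h.isBigO_rpow 0 one_half_pos one_half_lt_one)
  refine isBigO_principal.2 ⟨C ^ 2, fun x hx => ?_⟩
  have hsqrt : F x ≤ C * √(F x) := by
    simpa [abs_of_nonneg (h.nonneg x hx), Real.sqrt_eq_rpow,
      abs_of_nonneg (Real.rpow_nonneg (h.nonneg x hx) _)] using hC x hx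
  rw [Real.norm_of_nonneg (h.nonneg x hx), norm_one, mul_one]
  nlinarith [Real.sq_sqrt (h.nonneg x hx), sq_nonneg (C - √(F x))]

lemma isBigO_iteratedFDerivWithin_one (h : InfinitelyFlatOn F Ω) (m : ℕ) :
    iteratedFDerivWithin ℝ m F Ω =O[𝓟 Ω] fun _ => (1 : ℝ) := by
  have hsqrt : (fun x => F x ^ (1 / 2 : ℝ)) =O[𝓟 Ω] fun _ => (1 : ℝ) := by
    simpa using h.isBigO_one.rpow one_half_pos.le (Eventually.of_forall fun _ => zero_le_one)
  exact (h.isBigO_rpow m one_half_pos one_half_lt_one).trans hsqrt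

theorem memFs {s : ℝ} (hs : 0 < s) (hΩ : Convex ℝ Ω) (hΩ' : UniqueDiffOn ℝ Ω)
    (h : InfinitelyFlatOn F Ω) : MemFs s Ω F := by
  have hholder : holderSemi s Ω F ≠ ∞ :=
    holderSemi_ne_top hs hΩ
      (h.contDiffOn.differentiableOn_iteratedFDerivWithin
        (by exact_mod_cast ENat.natCast_lt_top _) hΩ')
      (h.isBigO_iteratedFDerivWithin_one _) (h.isBigO_iteratedFDerivWithin_one _)
  have hflat : flatSemi s Ω F ≠ ∞ := flatSemi_ne_top hs h.nonneg fun m hm1 hm => by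
    have hms : (m : ℝ) < s := (Nat.cast_le.2 hm).trans_lt (lowFloor_lt hs)
    have hm0 : (0 : ℝ) < m := by exact_mod_cast hm1
    exact h.isBigO_rpow m (div_pos (sub_pos.2 hms) hs) ((div_lt_one hs).2 (sub_lt_self s hm0))
  have hderiv : derivSup s Ω F ≠ ∞ :=
    derivSup_ne_top fun m _ => h.isBigO_iteratedFDerivWithin_one m
  exact ⟨⟨h.contDiffOn.of_le (by exact_mod_cast le_top), ENNReal.add_ne_top.2 ⟨hderiv, hholder⟩⟩,
    h.nonneg, hflat⟩

lemma const_mul {c : ℝ} (hc : 0 < c) (hΩ : UniqueDiffOn ℝ Ω) (h : InfinitelyFlatOn F Ω) :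
    InfinitelyFlatOn (fun x => c * F x) Ω where
  contDiffOn := contDiffOn_const.mul h.contDiffOn
  nonneg x hx := mul_nonneg hc.le (h.nonneg x hx)
  isBigO_rpow m θ hθ hθ1 := by
    have hderiv : EqOn (c • iteratedFDerivWithin ℝ m F Ω)
        (iteratedFDerivWithin ℝ m (fun x => c * F x) Ω) Ω := fun x hx =>
      (iteratedFDerivWithin_const_smul_apply
        ((h.contDiffOn x hx).of_le (by exact_mod_cast le_top)) hΩ hx).symm
    have hpow : EqOn (fun x => c ^ θ * F x ^ θ) (fun x => (c * F x) ^ θ) Ω := fun x hx =>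
      (Real.mul_rpow hc.le (h.nonneg x hx)).symm
    exact ((h.isBigO_rpow m hθ hθ1).const_smul_left c |>.const_mul_right
      (Real.rpow_pos_of_pos hc θ).ne').congr' hderiv.eventuallyEq hpow.eventuallyEq

end InfinitelyFlatOn

lemma norm_iteratedFDerivWithin_comp_le_sum {𝕜 U V W : Type*} [NontriviallyNormedField 𝕜]
    [NormedAddCommGroup U] [NormedSpace 𝕜 U] [NormedAddCommGroup V] [NormedSpace 𝕜 V]
    [NormedAddCommGroup W] [NormedSpace 𝕜 W] {g : V → W} {f : U → V} {Ω : Set U} {t : Set V} {n : ℕ}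
    (hg : ContDiffOn 𝕜 n g t) (hf : ContDiffOn 𝕜 n f Ω) (ht : UniqueDiffOn 𝕜 t)
    (hΩ : UniqueDiffOn 𝕜 Ω) (hft : MapsTo f Ω t) {x : U} (hx : x ∈ Ω) :
    ‖iteratedFDerivWithin 𝕜 n (g ∘ f) Ω x‖ ≤
      n.factorial * (∑ i ∈ Finset.range (n + 1), ‖iteratedFDerivWithin 𝕜 i g t (f x)‖) *
        (1 + ∑ i ∈ Finset.Icc 1 n, ‖iteratedFDerivWithin 𝕜 i f Ω x‖) ^ n := by
  refine norm_iteratedFDerivWithin_comp_le hg hf le_rfl ht hΩ hft hx (fun i hi => ?_)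
    fun i hi hin => ?_
  · exact Finset.single_le_sum (f := fun i => ‖iteratedFDerivWithin 𝕜 i g t (f x)‖)
      (fun _ _ => norm_nonneg _) (Finset.mem_range_succ_iff.2 hi)
  · have hsum := Finset.single_le_sum (f := fun i => ‖iteratedFDerivWithin 𝕜 i f Ω x‖)
      (fun _ _ => norm_nonneg _) (Finset.mem_Icc.2 ⟨hi, hin⟩)
    have hnonneg := (norm_nonneg (iteratedFDerivWithin 𝕜 i f Ω x)).trans hsum
    exact (hsum.trans (le_add_of_nonneg_left zero_le_one)).trans
      (le_self_pow₀ (le_add_of_nonneg_right hnonneg) (by lia))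

theorem InfinitelyFlatOn.comp {V : Type*} [NormedAddCommGroup V] [NormedSpace ℝ V] {g : V → ℝ}
    {f : E → V} {Ω : Set E} {t : Set V} (hg : InfinitelyFlatOn g t)
    (hf : ContDiffOn ℝ (⊤ : ℕ∞) f Ω) (ht : UniqueDiffOn ℝ t) (hΩ : UniqueDiffOn ℝ Ω)
    (hft : MapsTo f Ω t)
    (hf' : ∀ m, 1 ≤ m →
      iteratedFDerivWithin ℝ m f Ω =O[𝓟 (Ω ∩ {x | g (f x) ≠ 0})] fun _ => (1 : ℝ)) :
    InfinitelyFlatOn (g ∘ f) Ω where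
  contDiffOn := hg.contDiffOn.comp hf hft
  nonneg x hx := hg.nonneg _ (hft hx)
  isBigO_rpow n θ hθ hθ1 := by
    let A (y : V) : ℝ := ∑ i ∈ Finset.range (n + 1), ‖iteratedFDerivWithin ℝ i g t y‖
    let D (x : E) : ℝ := 1 + ∑ i ∈ Finset.Icc 1 n, ‖iteratedFDerivWithin ℝ i f Ω x‖
    have hA : A =O[𝓟 t] fun y => g y ^ θ :=
      IsBigO.fun_sum fun i _ => (hg.isBigO_rpow i hθ hθ1).norm_left
    have hD : (fun x => D x ^ n) =O[𝓟 (Ω ∩ {x | g (f x) ≠ 0})] fun _ => (1 : ℝ) := by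
      simpa using ((isBigO_refl (fun _ => (1 : ℝ)) _).add
        (IsBigO.fun_sum fun i hi => (hf' i (Finset.mem_Icc.1 hi).1).norm_left)).pow n
    have hcomp : iteratedFDerivWithin ℝ n (g ∘ f) Ω =O[𝓟 Ω] fun x => A (f x) * D x ^ n := by
      refine isBigO_principal.2 ⟨n.factorial, fun x hx => ?_⟩
      have hle : ‖iteratedFDerivWithin ℝ n (g ∘ f) Ω x‖ ≤ n.factorial * A (f x) * D x ^ n :=
        norm_iteratedFDerivWithin_comp_le_sum (hg.contDiffOn.of_le (by exact_mod_cast le_top))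
          (hf.of_le (by exact_mod_cast le_top)) ht hΩ hft hx
      rw [mul_assoc] at hle
      exact hle.trans (by gcongr; exact Real.le_norm_self _)
    -- Where `g ∘ f` vanishes so does `A ∘ f`, so it is harmless that `D` is unbounded there.
    have hAD : (fun x => A (f x) * D x ^ n) =O[𝓟 Ω] fun x => g (f x) ^ θ := by
      have hAf := hA.comp_tendsto (tendsto_principal_principal.2 hft)
      rw [← inter_union_sdiff Ω {x | g (f x) ≠ 0}, ← sup_principal, isBigO_sup]
      constructor
      · simpa using (hAf.mono (principal_mono.2 inter_subset_left)).mul hD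
      · obtain ⟨a, ha⟩ := isBigO_principal.1 hAf
        refine isBigO_principal.2 ⟨0, fun x ⟨hx, hgx⟩ => ?_⟩
        have hgx : g (f x) = 0 := by simpa [hx] using hgx
        have hAx : A (f x) = 0 := by simpa [hgx, Real.zero_rpow hθ.ne'] using ha x hx
        simp [hAx]
    exact hcomp.trans hAD

section ExpNegInvGlue

open Polynomial

lemma exists_iteratedDeriv_expNegInvGlue_eq (n : ℕ) :
    ∃ p : ℝ[X], iteratedDeriv n expNegInvGlue = fun x => p.eval x⁻¹ * expNegInvGlue x := by
  induction n with
  | zero => exact ⟨1, by simp⟩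
  | succ n ih =>
    obtain ⟨p, hp⟩ := ih
    refine ⟨X ^ 2 * (p - derivative p), funext fun x => ?_⟩
    rw [iteratedDeriv_succ, hp]
    exact (expNegInvGlue.hasDerivAt_polynomial_eval_inv_mul p x).deriv

lemma isBigO_polynomial_eval_exp_mul (p : ℝ[X]) {a : ℝ} (ha : 0 < a) :
    (fun x => p.eval x) =O[𝓟 (Ici 0)] fun x => Real.exp (a * x) := by
  induction p using Polynomial.induction_on' with
  | add p q hp hq => simpa only [eval_add] using hp.add hq
  | monomial n c =>
    have hpow : (fun x : ℝ => x ^ n) =O[𝓟 (Ici 0)] fun x => Real.exp (a * x) := by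
      refine isBigO_principal.2 ⟨n.factorial / a ^ n, fun x (hx : 0 ≤ x) => ?_⟩
      have hexp := Real.pow_div_factorial_le_exp (a * x) (by positivity) n
      rw [norm_pow, Real.norm_of_nonneg hx, Real.norm_of_nonneg (Real.exp_pos _).le]
      calc x ^ n = n.factorial / a ^ n * ((a * x) ^ n / n.factorial) := by rw [mul_pow]; field_simp
        _ ≤ n.factorial / a ^ n * Real.exp (a * x) := by gcongr
    simpa only [eval_monomial] using hpow.const_mul_left c

lemma isBigO_polynomial_eval_inv_mul_expNegInvGlue (p : ℝ[X]) {θ : ℝ} (hθ : θ < 1) :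
    (fun x => p.eval x⁻¹ * expNegInvGlue x) =O[⊤] fun x => expNegInvGlue x ^ θ := by
  obtain ⟨C, hC, hp⟩ := (isBigO_polynomial_eval_exp_mul p (sub_pos.2 hθ)).exists_nonneg
  refine isBigO_top.2 ⟨C, fun x => ?_⟩
  rcases le_or_gt x 0 with hx | hx
  · rw [expNegInvGlue.zero_of_nonpos hx, mul_zero, norm_zero]
    positivity
  · have hp' := isBigOWith_principal.1 hp x⁻¹ (inv_nonneg.2 hx.le)
    have hexp : expNegInvGlue x = Real.exp (-x⁻¹) := if_neg hx.not_ge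
    rw [Real.norm_of_nonneg (Real.exp_pos _).le] at hp'
    rw [hexp, norm_mul, Real.norm_of_nonneg (Real.exp_pos _).le, ← Real.exp_mul,
      Real.norm_of_nonneg (Real.exp_pos _).le]
    calc ‖p.eval x⁻¹‖ * Real.exp (-x⁻¹)
        ≤ C * Real.exp ((1 - θ) * x⁻¹) * Real.exp (-x⁻¹) := by gcongr
      _ = C * Real.exp (-x⁻¹ * θ) := by
        rw [mul_assoc, ← Real.exp_add]
        ring_nf

theorem infinitelyFlatOn_expNegInvGlue : InfinitelyFlatOn expNegInvGlue univ where
  contDiffOn := expNegInvGlue.contDiff.contDiffOn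
  nonneg x _ := expNegInvGlue.nonneg x
  isBigO_rpow m θ _ hθ1 := by
    obtain ⟨p, hp⟩ := exists_iteratedDeriv_expNegInvGlue_eq m
    have hnorm (x : ℝ) : ‖p.eval x⁻¹ * expNegInvGlue x‖ =
        ‖iteratedFDerivWithin ℝ m expNegInvGlue univ x‖ := by
      rw [iteratedFDerivWithin_univ, norm_iteratedFDeriv_eq_norm_iteratedDeriv, hp]
    rw [principal_univ]
    exact ((isBigO_polynomial_eval_inv_mul_expNegInvGlue p hθ1).norm_left.congr_left
      hnorm).of_norm_left

end ExpNegInvGlue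

lemma stdBump_eq_exp_one_mul_expNegInvGlue :
    stdBump = fun t => Real.exp 1 * (expNegInvGlue ∘ fun u => 1 - u ^ 2) t := by
  funext t
  by_cases h : t ^ 2 < 1
  · simp only [stdBump, expNegInvGlue, Function.comp_apply, if_pos h, if_neg (sub_pos.2 h).not_ge]
    rw [← Real.exp_add, one_div, sub_eq_add_neg]
  · simp [stdBump, h, expNegInvGlue.zero_of_nonpos (sub_nonpos.2 (not_lt.1 h))]

theorem infinitelyFlatOn_stdBump : InfinitelyFlatOn stdBump univ := by
  have hsmooth : ContDiff ℝ (⊤ : ℕ∞) fun t : ℝ => 1 - t ^ 2 := by fun_prop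
  have hsupp : univ ∩ {t : ℝ | expNegInvGlue (1 - t ^ 2) ≠ 0} ⊆ Icc (-1) 1 := fun t ht => by
    have hpos : 0 < 1 - t ^ 2 := not_le.1 (expNegInvGlue.zero_iff_nonpos.not.1 ht.2)
    exact abs_le.1 ((sq_le_one_iff_abs_le_one t).1 (sub_pos.1 hpos).le)
  have hbdd (m : ℕ) : iteratedFDerivWithin ℝ m (fun t : ℝ => 1 - t ^ 2) univ
      =O[𝓟 (Icc (-1) 1)] fun _ => (1 : ℝ) := by
    rw [iteratedFDerivWithin_univ]
    exact (hsmooth.continuous_iteratedFDeriv (by exact_mod_cast le_top)).continuousOn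
      |>.isBigO_principal isCompact_Icc (by simp)
  rw [stdBump_eq_exp_one_mul_expNegInvGlue]
  exact (infinitelyFlatOn_expNegInvGlue.comp hsmooth.contDiffOn uniqueDiffOn_univ uniqueDiffOn_univ
    (mapsTo_univ _ _) fun m _ => (hbdd m).mono (principal_mono.2 hsupp)).const_mul
    (Real.exp_pos 1) uniqueDiffOn_univ

/-- Proposition `bump-flat`: for every `s > 0` there is a
constant `C(s)` with `g ∈ F^s(ℝ)` and `‖g‖_{F^s(ℝ)} ≤ C`. -/
theorem statement10 (s : ℝ) (hs : 0 < s) :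
    ∃ C : ℝ, 0 < C ∧
      MemFs s (Set.univ : Set ℝ) stdBump ∧
      fsNorm s (Set.univ : Set ℝ) stdBump ≤ ENNReal.ofReal C := by
  have hmem : MemFs s univ stdBump :=
    infinitelyFlatOn_stdBump.memFs hs convex_univ uniqueDiffOn_univ
  refine ⟨(fsNorm s univ stdBump).toReal + 1, by positivity, hmem, ?_⟩
  exact (ENNReal.le_ofReal_iff_toReal_le hmem.fsNorm_ne_top (by positivity)).2
    (le_add_of_nonneg_right zero_le_one)

end
end

section
/- Let s > 0, n ≥ 1, let E ⊆ ℝⁿ be a finite set, and let f : E → [0,∞). For x ∈ E and M ≥ 0 define Γ_f(x,M) := {P ∈ Γ(x,M) : P(x) = f(x)}. Then (Γ_f(x,M))_{x∈E,M≥0} is a shape field, and it is (C,1)-Whitney convex for some constant C depending only on n, s. -/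
open Set ENNReal
open scoped NNReal

noncomputable section

variable {E : Type*} [NormedAddCommGroup E] [NormedSpace ℝ E]

/-- A shape field on a (finite) set `Eset`: a family of convex sets of
polynomials of degree at most `⌊s⌋`, monotone in `M`. -/
def IsShapeField (s : ℝ) (Eset : Set E) (Γ : E → ℝ → Set (E → ℝ)) : Prop :=
  (∀ x ∈ Eset, ∀ M : ℝ, 0 ≤ M →
    (∀ P ∈ Γ x M, IsPolyDeg (lowFloor s) P) ∧ Convex ℝ (Γ x M)) ∧
  (∀ x ∈ Eset, ∀ M M' : ℝ, 0 ≤ M → M ≤ M' → Γ x M ⊆ Γ x M')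

/-- `(A₀, δ₀)`-Whitney convexity of a shape field. -/
def WhitneyConvex (s : ℝ) (Eset : Set E) (Γ : E → ℝ → Set (E → ℝ))
    (A₀ δ₀ : ℝ) : Prop :=
  ∀ δ : ℝ, 0 < δ → δ ≤ δ₀ → ∀ x₀ ∈ Eset, ∀ M : ℝ, 0 ≤ M →
  ∀ P₁ ∈ Γ x₀ M, ∀ P₂ ∈ Γ x₀ M,
    (∀ m ≤ lowFloor s,
      ‖iteratedFDeriv ℝ m (P₁ - P₂) x₀‖ ≤ M * δ ^ (s - (m : ℝ))) →
  ∀ Q₁ Q₂ : E → ℝ, IsPolyDeg (lowFloor s) Q₁ → IsPolyDeg (lowFloor s) Q₂ →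
    jetAt (lowFloor s) (fun z => Q₁ z ^ 2 + Q₂ z ^ 2) x₀ = (fun _ => 1) →
    (∀ m ≤ lowFloor s, ‖iteratedFDeriv ℝ m Q₁ x₀‖ ≤ δ ^ (-(m : ℝ))) →
    (∀ m ≤ lowFloor s, ‖iteratedFDeriv ℝ m Q₂ x₀‖ ≤ δ ^ (-(m : ℝ))) →
    jetAt (lowFloor s) (fun z => Q₁ z ^ 2 * P₁ z + Q₂ z ^ 2 * P₂ z) x₀
      ∈ Γ x₀ (A₀ * M)

/-- The axis-parallel cube with center `c` and sidelength `δ` in `ℝⁿ`. -/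
def cube (n : ℕ) (c : EuclideanSpace ℝ (Fin n)) (δ : ℝ) :
    Set (EuclideanSpace ℝ (Fin n)) :=
  {x | ∀ i : Fin n, |x i - c i| ≤ δ / 2}

/-!
Flatness of `P` at level `M` says that `‖∇^m P(x)‖ ≤ M^{m/s} P(x)^{1-m/s}`. With the value `P(x)`
fixed, these bounds are convex in `P`, which gives the shape field property. For Whitney convexity,
`Q₁² + Q₂² = 1` to order `⌊s⌋` at `x`, so `Q₁² P₁ + Q₂² P₂` has the same jet as
`P₁ + Q₂² (P₂ - P₁)`. In the Leibniz expansion of the second summand a derivative of `Q₂²` of order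
`k` costs a multiple of `δ^{-k}`. A `j`-th derivative of `P₂ - P₁` is bounded both by `M δ^{s-j}`
and by twice the flatness bound of order `j`; the weighted geometric mean of the two, with weight
`θ = k / (s - j)` on the former, contains exactly the factor `δ^k` needed to pay for this, and what
remains is the flatness bound of order `j + k`.
-/

open scoped ContDiff

theorem cast_lt_of_le_lowFloor {s : ℝ} (hs : 0 < s) {m : ℕ} (hm : m ≤ lowFloor s) :
    (m : ℝ) < s := by
  have hceil : 0 < ⌈s⌉₊ := Nat.ceil_pos.2 hs
  exact Nat.lt_ceil.1 (by unfold lowFloor at hm; omega)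

theorem le_rpow_mul_rpow_one_sub {d A B θ : ℝ} (hd : 0 ≤ d) (hA : d ≤ A) (hB : d ≤ B)
    (hθ₀ : 0 ≤ θ) (hθ₁ : θ ≤ 1) : d ≤ A ^ θ * B ^ (1 - θ) := by
  have hθ : 0 ≤ 1 - θ := sub_nonneg.2 hθ₁
  have hA₀ : 0 ≤ A := hd.trans hA
  calc d = d ^ θ * d ^ (1 - θ) := by
        rw [← Real.rpow_add_of_nonneg hd hθ₀ hθ, add_sub_cancel, Real.rpow_one]
    _ ≤ A ^ θ * B ^ (1 - θ) := by gcongr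

/-! ### Bounds on iterated derivatives -/

theorem norm_iteratedFDeriv_mul_le_add_pow {𝕜 V A : Type*} [NontriviallyNormedField 𝕜]
    [NormedAddCommGroup V] [NormedSpace 𝕜 V] [NormedRing A] [NormedAlgebra 𝕜 A]
    {f g : V → A} {m : ℕ} (hf : ContDiff 𝕜 m f) (hg : ContDiff 𝕜 m g) {x : V} {b r t : ℝ}
    (h : ∀ i j, i + j = m →
      ‖iteratedFDeriv 𝕜 i f x‖ * ‖iteratedFDeriv 𝕜 j g x‖ ≤ r ^ i * t ^ j * b) :
    ‖iteratedFDeriv 𝕜 m (fun z => f z * g z) x‖ ≤ (r + t) ^ m * b := by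
  calc ‖iteratedFDeriv 𝕜 m (fun z => f z * g z) x‖
      ≤ ∑ i ∈ Finset.range (m + 1),
          m.choose i * ‖iteratedFDeriv 𝕜 i f x‖ * ‖iteratedFDeriv 𝕜 (m - i) g x‖ :=
        norm_iteratedFDeriv_mul_le hf hg x le_rfl
    _ ≤ ∑ i ∈ Finset.range (m + 1), r ^ i * t ^ (m - i) * m.choose i * b := by
        refine Finset.sum_le_sum fun i hi => ?_
        have hi' : i + (m - i) = m := Nat.add_sub_of_le (Finset.mem_range_succ_iff.1 hi)
        calc (m.choose i : ℝ) * ‖iteratedFDeriv 𝕜 i f x‖ * ‖iteratedFDeriv 𝕜 (m - i) g x‖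
            = m.choose i * (‖iteratedFDeriv 𝕜 i f x‖ * ‖iteratedFDeriv 𝕜 (m - i) g x‖) :=
              mul_assoc _ _ _
          _ ≤ m.choose i * (r ^ i * t ^ (m - i) * b) :=
              mul_le_mul_of_nonneg_left (h i _ hi') (by positivity)
          _ = r ^ i * t ^ (m - i) * m.choose i * b := by ring
    _ = (r + t) ^ m * b := by rw [add_pow, Finset.sum_mul]

theorem norm_iteratedFDeriv_sq_le {𝕜 V A : Type*} [NontriviallyNormedField 𝕜]
    [NormedAddCommGroup V] [NormedSpace 𝕜 V] [NormedRing A] [NormedAlgebra 𝕜 A]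
    {f : V → A} {m : ℕ} (hf : ContDiff 𝕜 m f) {x : V} {r : ℝ}
    (h : ∀ i ≤ m, ‖iteratedFDeriv 𝕜 i f x‖ ≤ r ^ i) :
    ‖iteratedFDeriv 𝕜 m (fun z => f z ^ 2) x‖ ≤ (2 * r) ^ m := by
  have hmul := norm_iteratedFDeriv_mul_le_add_pow hf hf (x := x) (b := 1) (r := r) (t := r)
    fun i j hij => by
      have hi := h i (by omega)
      have hj := h j (by omega)
      rw [mul_one]
      exact mul_le_mul hi hj (norm_nonneg _) ((norm_nonneg _).trans hi)
  simpa only [sq, two_mul, mul_one] using hmul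

theorem convex_setOf_norm_iteratedFDeriv_le {F : Type*} [NormedAddCommGroup F] [NormedSpace ℝ F]
    (m : ℕ) (x : E) (B : ℝ) :
    Convex ℝ {P : E → F | ContDiffAt ℝ m P x ∧ ‖iteratedFDeriv ℝ m P x‖ ≤ B} := by
  rintro P ⟨hP, hPB⟩ Q ⟨hQ, hQB⟩ a b ha hb hab
  have haP : ContDiffAt ℝ m (a • P) x := hP.const_smul a
  have hbQ : ContDiffAt ℝ m (b • Q) x := hQ.const_smul b
  refine ⟨haP.add hbQ, ?_⟩
  rw [iteratedFDeriv_add_apply haP hbQ, iteratedFDeriv_const_smul_apply hP,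
    iteratedFDeriv_const_smul_apply hQ]
  simpa only [mem_closedBall_zero_iff] using
    convex_closedBall (0 : E [×m]→L[ℝ] F) B (mem_closedBall_zero_iff.2 hPB)
      (mem_closedBall_zero_iff.2 hQB) ha hb hab

/-! ### Polynomials and jets -/

/-- The power series at `x` of the Taylor polynomial `jetAt D F x`. It makes Mathlib's theory of
finite power series available for jets. -/
def jetSeries (D : ℕ) (F : E → ℝ) (x : E) : FormalMultilinearSeries ℝ E ℝ :=
  fun m => if m ≤ D then (m.factorial : ℝ)⁻¹ • iteratedFDeriv ℝ m F x else 0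

theorem hasFiniteFPowerSeriesOnBall_jetAt (D : ℕ) (F : E → ℝ) (x : E) :
    HasFiniteFPowerSeriesOnBall (jetAt D F x) (jetSeries D F x) x (D + 1) ⊤ := by
  refine .mk' (fun m hm => if_neg (by omega)) ENNReal.zero_lt_top fun y _ => ?_
  simp only [jetAt, add_sub_cancel_left]
  refine Finset.sum_congr rfl fun m hm => ?_
  simp [jetSeries, Finset.mem_range_succ_iff.1 hm, div_eq_inv_mul]

theorem contDiff_jetAt (D : ℕ) (F : E → ℝ) (x : E) {N : ℕ∞ω} : ContDiff ℝ N (jetAt D F x) :=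
  contDiff_iff_contDiffAt.2 fun _ =>
    ((hasFiniteFPowerSeriesOnBall_jetAt D F x).cpolynomialAt_of_mem (by simp)).contDiffAt

theorem isPolyDeg_jetAt (D : ℕ) (F : E → ℝ) (x : E) : IsPolyDeg D (jetAt D F x) := by
  refine ⟨contDiff_jetAt D F x, fun y => ?_⟩
  have hy := (hasFiniteFPowerSeriesOnBall_jetAt D F x).changeOrigin (y := y - x) (by simp)
  rw [add_sub_cancel] at hy
  ext v
  rw [hy.toHasFPowerSeriesOnBall.iteratedFDeriv_eq_sum_of_completeSpace, hy.finite _ le_rfl]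
  simp

theorem jetAt_self (D : ℕ) (F : E → ℝ) (x : E) : jetAt D F x x = F x := by
  rw [jetAt, Finset.sum_eq_single 0]
  · simp
  · intro m _ hm
    have : Nonempty (Fin m) := ⟨⟨0, Nat.pos_of_ne_zero hm⟩⟩
    have hzero : (fun _ : Fin m => x - x) = 0 := by ext; simp
    rw [hzero, ContinuousMultilinearMap.map_zero, zero_div]
  · simp

theorem iteratedFDeriv_jetAt {D m : ℕ} (hm : m ≤ D) {F : E → ℝ} {x : E}
    (hF : ContDiffAt ℝ ω F x) :
    iteratedFDeriv ℝ m (jetAt D F x) x = iteratedFDeriv ℝ m F x := by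
  ext v
  have hsymm (σ : Equiv.Perm (Fin m)) :
      iteratedFDeriv ℝ m F x (fun i => v (σ i)) = iteratedFDeriv ℝ m F x v :=
    hF.iteratedFDeriv_comp_perm v σ
  rw [(hasFiniteFPowerSeriesOnBall_jetAt D F
    x).toHasFPowerSeriesOnBall.iteratedFDeriv_eq_sum_of_completeSpace]
  simp only [jetSeries, hm, if_true, smul_apply, hsymm, smul_eq_mul, Finset.sum_const,
    Finset.card_univ, Fintype.card_perm, Fintype.card_fin, nsmul_eq_mul]
  exact mul_inv_cancel_left₀ (Nat.cast_ne_zero.2 m.factorial_ne_zero) _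

theorem IsPolyDeg.jetAt_eq {D : ℕ} {P : E → ℝ} (hP : IsPolyDeg D P) (x : E) :
    jetAt D P x = P := by
  ext y
  have hTaylor := map_add_eq_sum_add_integral_iteratedFDeriv (f := P) (x := x) (y := y - x)
    (n := D) fun t _ => (hP.1.of_le (by exact_mod_cast le_top)).contDiffAt
  simp only [hP.2, add_sub_cancel] at hTaylor
  simpa [jetAt, div_eq_inv_mul] using hTaylor.symm

theorem IsPolyDeg.contDiff {D : ℕ} {P : E → ℝ} (hP : IsPolyDeg D P) {N : ℕ∞ω} :
    ContDiff ℝ N P :=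
  hP.jetAt_eq 0 ▸ contDiff_jetAt D P 0

theorem convex_setOf_isPolyDeg (D : ℕ) : Convex ℝ {P : E → ℝ | IsPolyDeg D P} := by
  intro P hP Q hQ a b ha hb hab
  refine ⟨(hP.1.const_smul a).add (hQ.1.const_smul b), fun x => ?_⟩
  exact norm_le_zero_iff.1 (convex_setOf_norm_iteratedFDeriv_le (D + 1) x 0
    ⟨hP.contDiff.contDiffAt, norm_le_zero_iff.2 (hP.2 x)⟩
    ⟨hQ.contDiff.contDiffAt, norm_le_zero_iff.2 (hQ.2 x)⟩ ha hb hab).2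

theorem iteratedFDeriv_mul_of_jetAt_eq_one {D m : ℕ} (hm : m ≤ D) {W P : E → ℝ} {x : E}
    (hW : ContDiff ℝ ω W) (hP : ContDiff ℝ m P) (hone : jetAt D W x = fun _ => 1) :
    iteratedFDeriv ℝ m (fun z => W z * P z) x = iteratedFDeriv ℝ m P x := by
  have hWm : ContDiff ℝ m W := hW.of_le le_top
  set R : E → ℝ := W - fun _ => 1 with hR
  have hRm : ContDiff ℝ m R := hWm.sub contDiff_const
  have hzero (i : ℕ) (hi : i ≤ m) : iteratedFDeriv ℝ i R x = 0 := by
    rw [hR, iteratedFDeriv_sub_apply (hW.of_le le_top).contDiffAt contDiffAt_const,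
      ← iteratedFDeriv_jetAt (hi.trans hm) hW.contDiffAt, hone, sub_self]
  have hrest : ‖iteratedFDeriv ℝ m (fun z => R z * P z) x‖ ≤ (1 + 1) ^ m * 0 :=
    norm_iteratedFDeriv_mul_le_add_pow hRm hP fun i j hij => by simp [hzero i (by omega)]
  have hdecomp : (fun z => W z * P z) = P + fun z => R z * P z := by
    ext z; simp only [hR, Pi.add_apply, Pi.sub_apply]; ring
  rw [hdecomp, iteratedFDeriv_add_apply hP.contDiffAt (hRm.mul hP).contDiffAt,
    norm_le_zero_iff.1 (hrest.trans_eq (mul_zero _)), add_zero]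

/-! ### The flatness condition -/

/-- The bound `M^{m/s} a^{1-m/s}` on the `m`-th derivative of a jet with value `a` which is
equivalent to its flatness at level `M`; unlike the quotient form it needs no convention for
`a = 0`. -/
def flatBound (s M a : ℝ) (m : ℕ) : ℝ := M ^ ((m : ℝ) / s) * a ^ (1 - (m : ℝ) / s)

theorem flatBound_zero (s M a : ℝ) : flatBound s M a 0 = a := by
  simp [flatBound]

section flatBound

variable {s M a : ℝ} {j k m : ℕ}

theorem flatBound_nonneg (hM : 0 ≤ M) (ha : 0 ≤ a) : 0 ≤ flatBound s M a m := by
  unfold flatBound; positivity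

theorem flatBound_le (hms : (m : ℝ) < s) (ha : 0 ≤ a) (haM : a ≤ M) : flatBound s M a m ≤ M := by
  have hs : 0 < s := m.cast_nonneg.trans_lt hms
  have hexp : 0 ≤ 1 - (m : ℝ) / s := sub_nonneg.2 ((div_le_one hs).2 hms.le)
  have hM : 0 ≤ M := ha.trans haM
  calc flatBound s M a m ≤ M ^ ((m : ℝ) / s) * M ^ (1 - (m : ℝ) / s) := by
        unfold flatBound; gcongr
    _ = M := by
        rw [← Real.rpow_add_of_nonneg hM (by positivity) hexp, add_sub_cancel, Real.rpow_one]

theorem flatBound_rpow_mul {K : ℝ} (hs : s ≠ 0) (hK : 0 ≤ K) (hM : 0 ≤ M) :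
    flatBound s (K ^ s * M) a m = K ^ m * flatBound s M a m := by
  rw [flatBound, flatBound, Real.mul_rpow (by positivity) hM, ← Real.rpow_mul hK,
    mul_div_cancel₀ _ hs, Real.rpow_natCast, mul_assoc]

theorem flatBound_add (hjk : (j : ℝ) + k < s) (hM : 0 ≤ M) (ha : 0 ≤ a) :
    flatBound s M a (j + k) =
      M ^ (k / (s - j)) * flatBound s M a j ^ (1 - k / (s - j)) := by
  have hsj : 0 < s - j := by linarith [k.cast_nonneg (α := ℝ)]
  have hs : 0 < s := by linarith [j.cast_nonneg (α := ℝ)]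
  have hθ : (k : ℝ) / (s - j) ≤ 1 := (div_le_one hsj).2 (by linarith)
  rw [flatBound, flatBound, Real.mul_rpow (by positivity) (by positivity), ← Real.rpow_mul hM,
    ← Real.rpow_mul ha, ← mul_assoc, ← Real.rpow_add_of_nonneg hM (by positivity)
      (mul_nonneg (by positivity) (sub_nonneg.2 hθ))]
  congr 2 <;> push_cast <;> field_simp <;> ring

theorem inv_pow_mul_le_flatBound_add {δ d K : ℝ} (hjk : (j : ℝ) + k < s) (hM : 0 ≤ M) (ha : 0 ≤ a)
    (hδ : 0 < δ) (hK : 1 ≤ K) (hd : 0 ≤ d) (hsmall : d ≤ M * δ ^ (s - (j : ℝ)))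
    (hflat : d ≤ K * flatBound s M a j) :
    δ⁻¹ ^ k * d ≤ K * flatBound s M a (j + k) := by
  have hsj : 0 < s - j := by linarith [k.cast_nonneg (α := ℝ)]
  have hB : 0 ≤ flatBound s M a j := flatBound_nonneg hM ha
  have hB' : 0 ≤ flatBound s M a (j + k) := flatBound_nonneg hM ha
  have hK₀ : 0 ≤ K := zero_le_one.trans hK
  set θ : ℝ := k / (s - j) with hθ
  have hθ₀ : 0 ≤ θ := by positivity
  have hθ₁ : θ ≤ 1 := (div_le_one hsj).2 (by linarith)
  have hδθ : (δ ^ (s - (j : ℝ))) ^ θ = δ ^ k := by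
    rw [← Real.rpow_mul hδ.le, hθ, mul_div_cancel₀ _ hsj.ne', Real.rpow_natCast]
  calc δ⁻¹ ^ k * d
      ≤ δ⁻¹ ^ k * ((M * δ ^ (s - (j : ℝ))) ^ θ * (K * flatBound s M a j) ^ (1 - θ)) := by
        gcongr
        exact le_rpow_mul_rpow_one_sub hd hsmall hflat hθ₀ hθ₁
    _ = (δ⁻¹ ^ k * δ ^ k) * (K ^ (1 - θ) * (M ^ θ * flatBound s M a j ^ (1 - θ))) := by
        rw [Real.mul_rpow hM (by positivity), Real.mul_rpow hK₀ hB, hδθ]; ring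
    _ = K ^ (1 - θ) * flatBound s M a (j + k) := by
        rw [← mul_pow, inv_mul_cancel₀ hδ.ne', one_pow, one_mul, flatBound_add hjk hM ha]
    _ ≤ K * flatBound s M a (j + k) := by
        gcongr
        exact Real.rpow_le_self_of_one_le hK (by linarith)

theorem flatness_quotient_le_iff {N : ℝ} (hm : 1 ≤ m) (hms : (m : ℝ) < s) (hM : 0 ≤ M)
    (ha : 0 ≤ a) (hN : 0 ≤ N) :
    (ENNReal.ofReal N ^ s / ENNReal.ofReal a ^ (s - (m : ℝ))) ^ (1 / (m : ℝ)) ≤ ENNReal.ofReal M ↔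
      N ≤ flatBound s M a m := by
  have hm₀ : (0 : ℝ) < m := by exact_mod_cast hm
  have hs : 0 < s := hm₀.trans hms
  have hsm : 0 ≤ s - (m : ℝ) := sub_nonneg.2 hms.le
  have hpow : flatBound s M a m ^ s = M ^ (m : ℝ) * a ^ (s - (m : ℝ)) := by
    rw [flatBound, Real.mul_rpow (by positivity) (by positivity), ← Real.rpow_mul hM,
      ← Real.rpow_mul ha, div_mul_cancel₀ _ hs.ne', sub_mul, div_mul_cancel₀ _ hs.ne', one_mul]
  rw [one_div, ENNReal.rpow_inv_le_iff hm₀, ENNReal.ofReal_rpow_of_nonneg hM hm₀.le,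
    ENNReal.ofReal_rpow_of_nonneg ha hsm, ENNReal.ofReal_rpow_of_nonneg hN hs.le,
    ENNReal.div_le_iff_le_mul (by simp) (by simp), ← ENNReal.ofReal_mul (by positivity),
    ENNReal.ofReal_le_ofReal_iff (by positivity), ← hpow,
    Real.rpow_le_rpow_iff hN (flatBound_nonneg hM ha) hs]

end flatBound

section Gamma

variable {s M : ℝ} {x : E}

theorem jetFlatAt_le_iff (hs : 0 < s) (hM : 0 ≤ M) {P : E → ℝ} (hP : 0 ≤ P x) :
    jetFlatAt s P x ≤ ENNReal.ofReal M ↔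
      ∀ m ≤ lowFloor s, ‖iteratedFDeriv ℝ m P x‖ ≤ flatBound s M (P x) m := by
  have hterm (m : ℕ) (hm : 1 ≤ m) (hmD : m ≤ lowFloor s) :
      ((‖iteratedFDeriv ℝ m P x‖₊ : ℝ≥0∞) ^ s / ENNReal.ofReal (P x) ^ (s - (m : ℝ)))
        ^ (1 / (m : ℝ)) ≤ ENNReal.ofReal M ↔
      ‖iteratedFDeriv ℝ m P x‖ ≤ flatBound s M (P x) m := by
    rw [← flatness_quotient_le_iff hm (cast_lt_of_le_lowFloor hs hmD) hM hP (norm_nonneg _),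
      ofReal_norm, enorm_eq_nnnorm]
  simp only [jetFlatAt, iSup_le_iff]
  refine ⟨fun h m hmD => ?_, fun h m hm hmD => (hterm m hm hmD).2 (h m hmD)⟩
  rcases Nat.eq_zero_or_pos m with rfl | hm
  · simp [flatBound_zero, abs_of_nonneg hP]
  · exact (hterm m hm hmD).1 (h m hm hmD)

theorem mem_Gamma_iff (hs : 0 < s) (hM : 0 ≤ M) {P : E → ℝ} :
    P ∈ Gamma s x M ↔ IsPolyDeg (lowFloor s) P ∧ 0 ≤ P x ∧ P x ≤ M ∧
      ∀ m ≤ lowFloor s, ‖iteratedFDeriv ℝ m P x‖ ≤ flatBound s M (P x) m := by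
  refine and_congr_right fun _ => and_congr_right fun hP => ?_
  rw [jetFlatAt_le_iff hs hM hP]
  refine and_congr_left fun hflat => ⟨fun hbound => ?_, fun hPM m hm => ?_⟩
  · simpa [abs_of_nonneg hP] using hbound 0 (Nat.zero_le _)
  · exact (hflat m hm).trans (flatBound_le (cast_lt_of_le_lowFloor hs hm) hP hPM)

theorem Gamma_mono {M' : ℝ} (hMM' : M ≤ M') : Gamma s x M ⊆ Gamma s x M' :=
  fun _ ⟨hpoly, hnonneg, hbound, hflat⟩ => ⟨hpoly, hnonneg, fun m hm => (hbound m hm).trans hMM',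
    hflat.trans (ENNReal.ofReal_le_ofReal hMM')⟩

theorem convex_Gamma_inter_value_eq (hs : 0 < s) (hM : 0 ≤ M) (c : ℝ) :
    Convex ℝ {P ∈ Gamma s x M | P x = c} := by
  rintro P ⟨hP, rfl⟩ Q ⟨hQ, hQP⟩ a b ha hb hab
  obtain ⟨hPpoly, hPnonneg, hPM, hPflat⟩ := (mem_Gamma_iff hs hM).1 hP
  obtain ⟨hQpoly, -, -, hQflat⟩ := (mem_Gamma_iff hs hM).1 hQ
  rw [hQP] at hQflat
  have hvalue : (a • P + b • Q) x = P x := by simp [hQP, ← add_mul, hab]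
  refine ⟨(mem_Gamma_iff hs hM).2 ?_, hvalue⟩
  rw [hvalue]
  exact ⟨convex_setOf_isPolyDeg _ hPpoly hQpoly ha hb hab, hPnonneg, hPM, fun m hm =>
    (convex_setOf_norm_iteratedFDeriv_le m x _ ⟨hPpoly.contDiff.contDiffAt, hPflat m hm⟩
      ⟨hQpoly.contDiff.contDiffAt, hQflat m hm⟩ ha hb hab).2⟩

end Gamma

/-! ### Whitney convexity -/

section WhitneyConvex

variable {s M : ℝ} {x : E}

theorem norm_iteratedFDeriv_sq_mul_le_flatBound {a δ : ℝ} {m : ℕ} (hms : (m : ℝ) < s) (hM : 0 ≤ M)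
    (ha : 0 ≤ a) (hδ : 0 < δ) {Q R : E → ℝ} (hQ : ContDiff ℝ m Q) (hR : ContDiff ℝ m R)
    (hQδ : ∀ i ≤ m, ‖iteratedFDeriv ℝ i Q x‖ ≤ δ⁻¹ ^ i)
    (hRsmall : ∀ j ≤ m, ‖iteratedFDeriv ℝ j R x‖ ≤ M * δ ^ (s - (j : ℝ)))
    (hRflat : ∀ j ≤ m, ‖iteratedFDeriv ℝ j R x‖ ≤ 2 * flatBound s M a j) :
    ‖iteratedFDeriv ℝ m (fun z => Q z ^ 2 * R z) x‖ ≤ 3 ^ m * (2 * flatBound s M a m) := by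
  have hprod (i j : ℕ) (hij : i + j = m) :
      ‖iteratedFDeriv ℝ i (fun z => Q z ^ 2) x‖ * ‖iteratedFDeriv ℝ j R x‖ ≤
        2 ^ i * 1 ^ j * (2 * flatBound s M a m) := by
    have him : i ≤ m := by omega
    have hjm : j ≤ m := by omega
    have hji : (j : ℝ) + i < s := by rw [← Nat.cast_add, add_comm j, hij]; exact hms
    calc ‖iteratedFDeriv ℝ i (fun z => Q z ^ 2) x‖ * ‖iteratedFDeriv ℝ j R x‖
        ≤ (2 * δ⁻¹) ^ i * ‖iteratedFDeriv ℝ j R x‖ := by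
          gcongr
          exact norm_iteratedFDeriv_sq_le (hQ.of_le (by exact_mod_cast him))
            fun l hl => hQδ l (hl.trans him)
      _ = 2 ^ i * (δ⁻¹ ^ i * ‖iteratedFDeriv ℝ j R x‖) := by rw [mul_pow, mul_assoc]
      _ ≤ 2 ^ i * (2 * flatBound s M a (j + i)) := by
          refine mul_le_mul_of_nonneg_left ?_ (by positivity)
          exact inv_pow_mul_le_flatBound_add hji hM ha hδ one_le_two (norm_nonneg _)
            (hRsmall j hjm) (hRflat j hjm)
      _ = 2 ^ i * 1 ^ j * (2 * flatBound s M a m) := by rw [one_pow, mul_one, add_comm j, hij]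
  rw [← two_add_one_eq_three]
  exact norm_iteratedFDeriv_mul_le_add_pow (hQ.pow 2) hR hprod

theorem norm_iteratedFDeriv_sq_mul_add_sq_mul_le {a δ : ℝ} {D m : ℕ} (hmD : m ≤ D)
    (hms : (m : ℝ) < s) (hM : 0 ≤ M) (ha : 0 ≤ a) (hδ : 0 < δ) {P₁ P₂ Q₁ Q₂ : E → ℝ}
    (hP₁ : ContDiff ℝ m P₁) (hP₂ : ContDiff ℝ m P₂)
    (hQ₁ : ContDiff ℝ ω Q₁) (hQ₂ : ContDiff ℝ ω Q₂)
    (hflat₁ : ∀ i ≤ m, ‖iteratedFDeriv ℝ i P₁ x‖ ≤ flatBound s M a i)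
    (hflat₂ : ∀ i ≤ m, ‖iteratedFDeriv ℝ i P₂ x‖ ≤ flatBound s M a i)
    (hdiff : ∀ i ≤ m, ‖iteratedFDeriv ℝ i (P₁ - P₂) x‖ ≤ M * δ ^ (s - (i : ℝ)))
    (hone : jetAt D (fun z => Q₁ z ^ 2 + Q₂ z ^ 2) x = fun _ => 1)
    (hQ₂δ : ∀ i ≤ m, ‖iteratedFDeriv ℝ i Q₂ x‖ ≤ δ⁻¹ ^ i) :
    ‖iteratedFDeriv ℝ m (fun z => Q₁ z ^ 2 * P₁ z + Q₂ z ^ 2 * P₂ z) x‖ ≤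
      (1 + 2 * 3 ^ m) * flatBound s M a m := by
  have hW : ContDiff ℝ ω fun z => Q₁ z ^ 2 + Q₂ z ^ 2 := (hQ₁.pow 2).add (hQ₂.pow 2)
  have hQ₂m : ContDiff ℝ m Q₂ := hQ₂.of_le le_top
  have hP₂₁ : ContDiff ℝ m (P₂ - P₁) := hP₂.sub hP₁
  have hflat (j : ℕ) (hj : j ≤ m) :
      ‖iteratedFDeriv ℝ j (P₂ - P₁) x‖ ≤ 2 * flatBound s M a j := by
    have hjm : (j : ℕ∞ω) ≤ m := by exact_mod_cast hj
    rw [iteratedFDeriv_sub_apply (hP₂.of_le hjm).contDiffAt (hP₁.of_le hjm).contDiffAt, two_mul]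
    exact (norm_sub_le _ _).trans (add_le_add (hflat₂ j hj) (hflat₁ j hj))
  have hsmall (j : ℕ) (hj : j ≤ m) :
      ‖iteratedFDeriv ℝ j (P₂ - P₁) x‖ ≤ M * δ ^ (s - (j : ℝ)) := by
    rw [← neg_sub, iteratedFDeriv_neg_apply, norm_neg]
    exact hdiff j hj
  have hdecomp : (fun z => Q₁ z ^ 2 * P₁ z + Q₂ z ^ 2 * P₂ z) =
      (fun z => (Q₁ z ^ 2 + Q₂ z ^ 2) * P₁ z) + fun z => Q₂ z ^ 2 * (P₂ - P₁) z := by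
    ext z; simp only [Pi.add_apply, Pi.sub_apply]; ring
  rw [hdecomp, iteratedFDeriv_add_apply ((hW.of_le le_top).mul hP₁).contDiffAt
      ((hQ₂m.pow 2).mul hP₂₁).contDiffAt, iteratedFDeriv_mul_of_jetAt_eq_one hmD hW hP₁ hone]
  calc ‖iteratedFDeriv ℝ m P₁ x + iteratedFDeriv ℝ m (fun z => Q₂ z ^ 2 * (P₂ - P₁) z) x‖
      ≤ flatBound s M a m + 3 ^ m * (2 * flatBound s M a m) :=
        norm_add_le_of_le (hflat₁ m le_rfl)
          (norm_iteratedFDeriv_sq_mul_le_flatBound hms hM ha hδ hQ₂m hP₂₁ hQ₂δ hsmall hflat)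
    _ = (1 + 2 * 3 ^ m) * flatBound s M a m := by ring

end WhitneyConvex

theorem one_add_two_mul_three_pow_le_nine_pow {m : ℕ} (hm : 1 ≤ m) :
    (1 + 2 * 3 ^ m : ℝ) ≤ 9 ^ m := by
  have hthree : (3 : ℝ) ≤ 3 ^ m := le_self_pow₀ (by norm_num) (by omega)
  have hnine : (9 : ℝ) ^ m = 3 ^ m * 3 ^ m := by rw [← mul_pow]; norm_num
  nlinarith

theorem isShapeField_Gamma_inter_value_eq {s : ℝ} (hs : 0 < s) (S : Set E) (f : E → ℝ) :
    IsShapeField s S fun x M => {P ∈ Gamma s x M | P x = f x} :=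
  ⟨fun x _ _ hM => ⟨fun _ hP => hP.1.1, convex_Gamma_inter_value_eq hs hM (f x)⟩,
    fun _ _ _ _ _ hMM' _ hP => ⟨Gamma_mono hMM' hP.1, hP.2⟩⟩

theorem whitneyConvex_Gamma_inter_value_eq {s : ℝ} (hs : 0 < s) (S : Set E) (f : E → ℝ) (δ₀ : ℝ) :
    WhitneyConvex s S (fun x M => {P ∈ Gamma s x M | P x = f x}) (9 ^ s) δ₀ := by
  rintro δ hδ - x - M hM P₁ ⟨hP₁, hv₁⟩ P₂ ⟨hP₂, hv₂⟩ hdiff Q₁ Q₂ hQ₁ hQ₂ hone - hQ₂δ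
  obtain ⟨hpoly₁, hfx, hfM, hflat₁⟩ := (mem_Gamma_iff hs hM).1 hP₁
  obtain ⟨hpoly₂, -, -, hflat₂⟩ := (mem_Gamma_iff hs hM).1 hP₂
  rw [hv₁] at hfx hfM hflat₁
  rw [hv₂] at hflat₂
  have hsmooth : ContDiff ℝ ω fun z => Q₁ z ^ 2 * P₁ z + Q₂ z ^ 2 * P₂ z :=
    ((hQ₁.contDiff.pow 2).mul hpoly₁.contDiff).add ((hQ₂.contDiff.pow 2).mul hpoly₂.contDiff)
  have hsum : Q₁ x ^ 2 + Q₂ x ^ 2 = 1 := by simpa only [jetAt_self] using congrFun hone x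
  have hvalue :
      jetAt (lowFloor s) (fun z => Q₁ z ^ 2 * P₁ z + Q₂ z ^ 2 * P₂ z) x x = f x := by
    rw [jetAt_self, hv₁, hv₂, ← add_mul, hsum, one_mul]
  have hC : (1 : ℝ) ≤ 9 ^ s := Real.one_le_rpow (by norm_num) hs.le
  refine ⟨(mem_Gamma_iff hs (by positivity)).2 ?_, hvalue⟩
  rw [hvalue]
  refine ⟨isPolyDeg_jetAt _ _ _, hfx, hfM.trans (le_mul_of_one_le_left hM hC), fun m hm => ?_⟩
  rcases Nat.eq_zero_or_pos m with rfl | hm₁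
  · simp [flatBound_zero, hvalue, abs_of_nonneg hfx]
  rw [iteratedFDeriv_jetAt hm hsmooth.contDiffAt, flatBound_rpow_mul hs.ne' (by norm_num) hM]
  calc ‖iteratedFDeriv ℝ m (fun z => Q₁ z ^ 2 * P₁ z + Q₂ z ^ 2 * P₂ z) x‖
      ≤ (1 + 2 * 3 ^ m) * flatBound s M (f x) m :=
        norm_iteratedFDeriv_sq_mul_add_sq_mul_le hm (cast_lt_of_le_lowFloor hs hm) hM hfx hδ
          hpoly₁.contDiff hpoly₂.contDiff hQ₁.contDiff hQ₂.contDiff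
          (fun i hi => hflat₁ i (hi.trans hm)) (fun i hi => hflat₂ i (hi.trans hm))
          (fun i hi => hdiff i (hi.trans hm)) hone fun i hi => by
            simpa only [Real.rpow_neg hδ.le, Real.rpow_natCast, inv_pow]
              using hQ₂δ i (hi.trans hm)
    _ ≤ 9 ^ m * flatBound s M (f x) m := by
        gcongr
        · exact flatBound_nonneg hM hfx
        · exact one_add_two_mul_three_pow_le_nine_pow hm₁

theorem statement16_general {s : ℝ} (hs : 0 < s) (S : Set E) (f : E → ℝ) (δ₀ : ℝ) :
    IsShapeField s S (fun x M => {P ∈ Gamma s x M | P x = f x}) ∧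
      WhitneyConvex s S (fun x M => {P ∈ Gamma s x M | P x = f x}) (9 ^ s) δ₀ :=
  ⟨isShapeField_Gamma_inter_value_eq hs S f, whitneyConvex_Gamma_inter_value_eq hs S f δ₀⟩

/-- Lemma `Cd convex`: for finite `E ⊆ ℝⁿ` and
`f : E → [0,∞)`, the family `Γ_f(x,M) := {P ∈ Γ(x,M) : P(x) = f(x)}` is a
shape field which is `(C,1)`-Whitney convex for some `C = C(n,s)`. -/
theorem statement16 (n : ℕ) (hn : 1 ≤ n) (s : ℝ) (hs : 0 < s) :
    ∃ C : ℝ, 0 < C ∧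
      ∀ (Eset : Set (EuclideanSpace ℝ (Fin n))), Eset.Finite →
      ∀ f : EuclideanSpace ℝ (Fin n) → ℝ, (∀ x ∈ Eset, 0 ≤ f x) →
        IsShapeField s Eset (fun x M => {P ∈ Gamma s x M | P x = f x}) ∧
        WhitneyConvex s Eset (fun x M => {P ∈ Gamma s x M | P x = f x}) C 1 :=
  ⟨9 ^ s, by positivity, fun Eset _ f _ => statement16_general hs Eset f 1⟩

end
end
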